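/- arXiv:2001.00303 — 2 statements merged into one kernel-verified Lean document; each statement's English description precedes it below -/
import Mathlib

section
/- There is a universal constant c ≥ 1 such that: for every δ ∈ (0,1), every integer Δ ≥ 3, every simple graph G on [n] with n ≥ 2 and maximum degree at most Δ, and λ = (1−δ)·λ_c(Δ), the Glauber dynamics of the hardcore distribution μ = μ_{G,λ} satisfies Var_μ(f) ≤ n^{exp(c/δ)} · E(f,f) for every function f : Finset (Fin n) → ℝ (i.e. its spectral gap is at least n^{−exp(c/δ)}). -/
open scoped Classical
open Finset

noncomputable section

namespace PaperStmt

variable {n : ℕ}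

/-- `S` is an independent set of `G`. -/
def IsIndepSet (G : SimpleGraph (Fin n)) (S : Finset (Fin n)) : Prop :=
  ∀ i ∈ S, ∀ j ∈ S, ¬ G.Adj i j

/-- The hardcore partition function `Z_G(λ)`. -/
def hardcoreZ (G : SimpleGraph (Fin n)) (lam : ℝ) : ℝ :=
  ∑ S : Finset (Fin n), if IsIndepSet G S then lam ^ S.card else 0

/-- The hardcore distribution `μ_{G,λ}`. -/
def hardcore (G : SimpleGraph (Fin n)) (lam : ℝ) : Finset (Fin n) → ℝ :=
  fun S => if IsIndepSet G S then lam ^ S.card / hardcoreZ G lam else 0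

/-- The uniqueness threshold `λ_c(Δ) = (Δ-1)^(Δ-1) / (Δ-2)^Δ`. -/
def lamC (Δ : ℕ) : ℝ := ((Δ : ℝ) - 1) ^ (Δ - 1) / ((Δ : ℝ) - 2) ^ Δ

/-- The Glauber dynamics transition kernel of `μ`. -/
def glauber (μ : Finset (Fin n) → ℝ) (S T : Finset (Fin n)) : ℝ :=
  (1 / n : ℝ) * ∑ i : Fin n,
    ((if T = S.erase i then μ (S.erase i) / (μ (S.erase i) + μ (insert i S)) else 0)
      + (if T = insert i S then μ (insert i S) / (μ (S.erase i) + μ (insert i S)) else 0))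

/-- The Dirichlet form of the Glauber dynamics of `μ`. -/
def dirichletForm (μ : Finset (Fin n) → ℝ) (f : Finset (Fin n) → ℝ) : ℝ :=
  (1 / 2 : ℝ) * ∑ S : Finset (Fin n), ∑ T : Finset (Fin n),
    μ S * glauber μ S T * (f S - f T) ^ 2

/-- The variance of `f` under `μ`. -/
def varianceE (μ : Finset (Fin n) → ℝ) (f : Finset (Fin n) → ℝ) : ℝ :=
  (∑ S : Finset (Fin n), μ S * f S ^ 2) - (∑ S : Finset (Fin n), μ S * f S) ^ 2

/-!
A bound on the total influence of every vertex in every induced subgraph gives a Poincaré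
inequality by induction on the number of vertices. Conditioning on whether a vertex is occupied
splits the variance into two conditional variances, which live on smaller induced subgraphs, and a
pinning term. Summed over the vertices, the pinning terms add up to at most the total influence
times the variance, because each row of the covariance matrix of the occupation variables is at
most the total influence times its diagonal entry (Selberg's inequality).

The total influence of `v` is bounded without passing to the tree of self-avoiding walks. Comparing
`v` unoccupied with `v` occupied amounts to deleting the neighbours of `v` one after the other, and
each deletion moves the occupation probabilities by an influence of the deleted neighbour in a
smaller graph, where it has at most `Δ - 1` neighbours left. With the potential `√(occProb)` this
recursion contracts by a factor `1 - δ / 20`, since `lamC Δ` is the extremal value of the recursion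
at the fixed point `1 / (Δ - 1)`.
-/

section Covariance

variable {Ω : Type*}

/-- The covariance form `E[fg] - E[f] E[g]` of an expectation, the latter being encoded as a linear
functional on all real functions. -/
def covForm (E : (Ω → ℝ) →ₗ[ℝ] ℝ) : LinearMap.BilinForm ℝ (Ω → ℝ) :=
  (LinearMap.mul ℝ (Ω → ℝ)).compr₂ E - (LinearMap.mul ℝ ℝ).compl₁₂ E E

variable {E : (Ω → ℝ) →ₗ[ℝ] ℝ}

lemma covForm_apply (f g : Ω → ℝ) : covForm E f g = E (f * g) - E f * E g := rfl

lemma expectation_sub_const_sq (hE1 : E 1 = 1) (f : Ω → ℝ) (a : ℝ) :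
    E (fun x => (f x - a) ^ 2) = covForm E f f + (E f - a) ^ 2 := by
  have hsq : (fun x => (f x - a) ^ 2) = f * f - (2 * a) • f + a ^ 2 • (1 : Ω → ℝ) := by
    funext x
    simp only [Pi.add_apply, Pi.sub_apply, Pi.mul_apply, Pi.smul_apply, Pi.one_apply, smul_eq_mul]
    ring
  rw [hsq, map_add, map_sub, map_smul, map_smul, hE1, covForm_apply, smul_eq_mul, smul_eq_mul]
  ring

lemma covForm_self_le (hE1 : E 1 = 1) (f : Ω → ℝ) (a : ℝ) :
    covForm E f f ≤ E (fun x => (f x - a) ^ 2) := by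
  rw [expectation_sub_const_sq hE1]
  exact le_add_of_nonneg_right (sq_nonneg _)

lemma covForm_isPosSemidef (hE : ∀ f, 0 ≤ f → 0 ≤ E f) (hE1 : E 1 = 1) :
    (covForm E).IsPosSemidef where
  eq f g := by simp only [covForm_apply, mul_comm]
  nonneg f := by
    have h := expectation_sub_const_sq hE1 f (E f)
    rw [sub_self, zero_pow two_ne_zero, add_zero] at h
    exact h ▸ hE _ fun _ => sq_nonneg _

end Covariance

section Selberg

variable {ι : Type*}

lemma sum_sum_mul_le_sum_sq_mul_sum_abs (s : Finset ι) {M : ι → ι → ℝ}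
    (hM : ∀ i j, M i j = M j i) (a : ι → ℝ) :
    ∑ i ∈ s, ∑ j ∈ s, a i * a j * M i j ≤ ∑ i ∈ s, a i ^ 2 * ∑ j ∈ s, |M i j| := by
  have amgm (i j : ι) : a i * a j * M i j ≤ a i ^ 2 * |M i j| / 2 + a j ^ 2 * |M j i| / 2 := by
    rw [hM j i]
    calc a i * a j * M i j ≤ |a i| * |a j| * |M i j| := by
          rw [← abs_mul, ← abs_mul]; exact le_abs_self _
      _ ≤ (|a i| ^ 2 + |a j| ^ 2) / 2 * |M i j| := by
          gcongr; linarith [two_mul_le_add_sq |a i| |a j|]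
      _ = a i ^ 2 * |M i j| / 2 + a j ^ 2 * |M i j| / 2 := by
          rw [sq_abs, sq_abs]; ring
  calc ∑ i ∈ s, ∑ j ∈ s, a i * a j * M i j
      ≤ ∑ i ∈ s, ∑ j ∈ s, (a i ^ 2 * |M i j| / 2 + a j ^ 2 * |M j i| / 2) :=
        sum_le_sum fun i _ => sum_le_sum fun j _ => amgm i j
    _ = ∑ i ∈ s, ∑ j ∈ s, a i ^ 2 * |M i j| := by
        simp only [sum_add_distrib]
        rw [sum_comm (f := fun i j => a j ^ 2 * |M j i| / 2)]
        simp only [← sum_div, add_halves]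
    _ = ∑ i ∈ s, a i ^ 2 * ∑ j ∈ s, |M i j| := by simp only [mul_sum]

/-- If `r i = 0` then `x i` is in the kernel of `B`, so the convention `0 / 0 = 0` is harmless. -/
theorem selberg_inequality {F : Type*} [AddCommGroup F] [Module ℝ F] {B : LinearMap.BilinForm ℝ F}
    (hB : B.IsPosSemidef) (s : Finset ι) (x : ι → F) {r : ι → ℝ}
    (hr : ∀ i ∈ s, ∑ j ∈ s, |B (x i) (x j)| ≤ r i) (y : F) :
    ∑ i ∈ s, B (x i) y ^ 2 / r i ≤ B y y := by
  have hsymm (u w : F) : B u w = B w u := hB.eq u w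
  set a : ι → ℝ := fun i => B (x i) y / r i with ha
  set z : F := ∑ i ∈ s, a i • x i with hz
  set Q : ℝ := ∑ i ∈ s, B (x i) y ^ 2 / r i with hQ
  have hzy : B z y = Q := by
    simp only [hz, hQ, ha, map_sum, map_smul, LinearMap.sum_apply, LinearMap.smul_apply,
      smul_eq_mul]
    exact sum_congr rfl fun i _ => by ring
  have hzz : B z z ≤ Q := calc
    B z z = ∑ i ∈ s, ∑ j ∈ s, a i * a j * B (x i) (x j) := by
        simp only [hz, map_sum, map_smul, LinearMap.sum_apply, LinearMap.smul_apply, smul_eq_mul,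
          mul_sum]
        rw [sum_comm]
        exact sum_congr rfl fun i _ => sum_congr rfl fun j _ => by ring
    _ ≤ ∑ i ∈ s, a i ^ 2 * ∑ j ∈ s, |B (x i) (x j)| :=
        sum_sum_mul_le_sum_sq_mul_sum_abs s (fun i j => hsymm _ _) a
    _ ≤ ∑ i ∈ s, a i ^ 2 * r i :=
        sum_le_sum fun i hi => mul_le_mul_of_nonneg_left (hr i hi) (sq_nonneg _)
    _ = Q := sum_congr rfl fun i _ => by
        rcases eq_or_ne (r i) 0 with h0 | h0
        · simp [ha, h0]
        · simp only [ha]; field_simp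
  have hpos : 0 ≤ B (y - z) (y - z) := hB.nonneg _
  rw [map_sub, map_sub, LinearMap.sub_apply, LinearMap.sub_apply, hsymm y z, hzy] at hpos
  linarith

end Selberg

section InducedHardcore

variable {V : Type*} [DecidableEq V] {G : SimpleGraph V} {lam : ℝ} {U S W : Finset V} {v : V}

/-- The unnormalised hardcore weight of `S`. -/
def hardcoreWeight (G : SimpleGraph V) (lam : ℝ) (S : Finset V) : ℝ :=
  if G.IsIndepSet S then lam ^ #S else 0

/-- The partition function of the hardcore model on the subgraph induced on `U`. -/
def partitionOn (G : SimpleGraph V) (lam : ℝ) (U : Finset V) : ℝ :=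
  ∑ S ∈ U.powerset, hardcoreWeight G lam S

/-- The expectation under the hardcore distribution of the subgraph induced on `U`. -/
def expOn (G : SimpleGraph V) (lam : ℝ) (U : Finset V) : (Finset V → ℝ) →ₗ[ℝ] ℝ :=
  (partitionOn G lam U)⁻¹ • ∑ S ∈ U.powerset, hardcoreWeight G lam S • LinearMap.proj S

/-- The vertices of `U` outside the closed neighbourhood of `v`. Conditioning the hardcore model
on `U` to contain `v` leaves the hardcore model on `awayFrom G U v`, and conditioning it to avoid
`v` leaves the one on `U.erase v`. -/
def awayFrom (G : SimpleGraph V) (U : Finset V) (v : V) : Finset V :=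
  {u ∈ U.erase v | ¬ G.Adj v u}

/-- The indicator of the event that the random set contains `v`. -/
def occ (v : V) (S : Finset V) : ℝ := if v ∈ S then 1 else 0

/-- The occupation probability of `v` in the subgraph induced on `U`. -/
def occProb (G : SimpleGraph V) (lam : ℝ) (U : Finset V) (v : V) : ℝ :=
  expOn G lam U (occ v)

lemma awayFrom_subset_erase : awayFrom G U v ⊆ U.erase v := filter_subset _ _

lemma notMem_awayFrom : v ∉ awayFrom G U v :=
  fun h => notMem_erase v U (awayFrom_subset_erase h)

lemma hardcoreWeight_nonneg (hlam : 0 < lam) (S : Finset V) : 0 ≤ hardcoreWeight G lam S := by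
  unfold hardcoreWeight; split_ifs <;> positivity

lemma isIndepSet_insert (hv : v ∉ S) :
    G.IsIndepSet (insert v S : Finset V) ↔ G.IsIndepSet S ∧ ∀ u ∈ S, ¬ G.Adj v u := by
  have : Std.Symm fun u w : V => ¬ G.Adj u w := ⟨fun _ _ h h' => h h'.symm⟩
  rw [coe_insert, SimpleGraph.isIndepSet_iff, SimpleGraph.isIndepSet_iff,
    Set.pairwise_insert_of_symm_of_notMem (mem_coe.not.2 hv)]
  simp only [mem_coe]

lemma hardcoreWeight_insert (hS : S ⊆ U.erase v) :
    hardcoreWeight G lam (insert v S) =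
      if S ⊆ awayFrom G U v then lam * hardcoreWeight G lam S else 0 := by
  have hv : v ∉ S := fun h => notMem_erase v U (hS h)
  have haway : S ⊆ awayFrom G U v ↔ ∀ u ∈ S, ¬ G.Adj v u :=
    ⟨fun h u hu => (mem_filter.1 (h hu)).2, fun h u hu => mem_filter.2 ⟨hS hu, h u hu⟩⟩
  simp only [hardcoreWeight, isIndepSet_insert hv, haway, card_insert_of_notMem hv, pow_succ']
  split_ifs <;> simp_all

lemma sum_hardcoreWeight_mul (hv : v ∈ U) (f : Finset V → ℝ) :
    ∑ S ∈ U.powerset, hardcoreWeight G lam S * f S =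
      ∑ S ∈ (U.erase v).powerset, hardcoreWeight G lam S * f S +
        lam * ∑ S ∈ (awayFrom G U v).powerset, hardcoreWeight G lam S * f (insert v S) := by
  have hinsert : ∀ S ∈ (U.erase v).powerset, hardcoreWeight G lam (insert v S) * f (insert v S) =
      if S ∈ (awayFrom G U v).powerset then
        lam * (hardcoreWeight G lam S * f (insert v S)) else 0 := by
    intro S hS
    rw [hardcoreWeight_insert (mem_powerset.1 hS), ite_mul, zero_mul, mul_assoc]
    simp only [mem_powerset]
  conv_lhs => rw [← insert_erase hv, sum_powerset_insert (notMem_erase v U)]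
  rw [sum_congr rfl hinsert, sum_ite_mem,
    inter_eq_right.2 (powerset_mono.2 awayFrom_subset_erase), mul_sum]

lemma partitionOn_eq_add (hv : v ∈ U) :
    partitionOn G lam U =
      partitionOn G lam (U.erase v) + lam * partitionOn G lam (awayFrom G U v) := by
  simpa only [partitionOn, mul_one] using
    sum_hardcoreWeight_mul (G := G) (lam := lam) hv (fun _ => 1)

lemma partitionOn_mono (hlam : 0 < lam) (h : U ⊆ W) : partitionOn G lam U ≤ partitionOn G lam W :=
  sum_le_sum_of_subset_of_nonneg (powerset_mono.2 h) fun S _ _ => hardcoreWeight_nonneg hlam S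

lemma partitionOn_pos (hlam : 0 < lam) (U : Finset V) : 0 < partitionOn G lam U := by
  refine lt_of_lt_of_le ?_ (partitionOn_mono hlam (empty_subset U))
  simp [partitionOn, hardcoreWeight]

lemma expOn_apply (f : Finset V → ℝ) :
    expOn G lam U f =
      (∑ S ∈ U.powerset, hardcoreWeight G lam S * f S) / partitionOn G lam U := by
  simp only [expOn, LinearMap.smul_apply, LinearMap.sum_apply, LinearMap.proj_apply, smul_eq_mul,
    inv_mul_eq_div]

lemma expOn_congr {f g : Finset V → ℝ} (h : ∀ S ⊆ U, f S = g S) :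
    expOn G lam U f = expOn G lam U g := by
  rw [expOn_apply, expOn_apply, sum_congr rfl fun S hS => by rw [h S (mem_powerset.1 hS)]]

lemma expOn_nonneg (hlam : 0 < lam) {f : Finset V → ℝ} (hf : 0 ≤ f) : 0 ≤ expOn G lam U f := by
  rw [expOn_apply]
  exact div_nonneg (sum_nonneg fun S _ => mul_nonneg (hardcoreWeight_nonneg hlam S) (hf S))
    (partitionOn_pos hlam U).le

lemma expOn_mono (hlam : 0 < lam) {f g : Finset V → ℝ} (hfg : f ≤ g) :
    expOn G lam U f ≤ expOn G lam U g := by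
  rw [← sub_nonneg, ← map_sub]
  exact expOn_nonneg hlam (sub_nonneg.2 hfg)

lemma expOn_one (hlam : 0 < lam) : expOn G lam U 1 = 1 := by
  simp only [expOn_apply, Pi.one_apply, mul_one]
  exact div_self (partitionOn_pos hlam U).ne'

lemma covForm_expOn_isPosSemidef (hlam : 0 < lam) (U : Finset V) :
    (covForm (expOn G lam U)).IsPosSemidef :=
  covForm_isPosSemidef (fun _ => expOn_nonneg hlam) (expOn_one hlam)

lemma occProb_eq_zero (hv : v ∉ U) : occProb G lam U v = 0 := by
  rw [occProb, expOn_congr (g := 0), map_zero]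
  exact fun S hS => if_neg fun h => hv (hS h)

lemma occProb_eq (hv : v ∈ U) :
    occProb G lam U v = lam * partitionOn G lam (awayFrom G U v) / partitionOn G lam U := by
  have herase : ∑ S ∈ (U.erase v).powerset, hardcoreWeight G lam S * occ v S = 0 :=
    sum_eq_zero fun S hS => by
      rw [occ, if_neg fun h => notMem_erase v U (mem_powerset.1 hS h), mul_zero]
  rw [occProb, expOn_apply, sum_hardcoreWeight_mul hv, herase, zero_add]
  simp only [occ, mem_insert_self, if_true, mul_one, partitionOn]

lemma one_sub_occProb (hlam : 0 < lam) (hv : v ∈ U) :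
    1 - occProb G lam U v = partitionOn G lam (U.erase v) / partitionOn G lam U := by
  have hU := (partitionOn_pos (G := G) hlam U).ne'
  rw [occProb_eq hv, eq_div_iff hU, sub_mul, div_mul_cancel₀ _ hU, partitionOn_eq_add hv]
  ring

lemma occProb_pos (hlam : 0 < lam) (hv : v ∈ U) : 0 < occProb G lam U v := by
  rw [occProb_eq hv]
  exact div_pos (mul_pos hlam (partitionOn_pos hlam _)) (partitionOn_pos hlam U)

lemma one_sub_occProb_pos (hlam : 0 < lam) (hv : v ∈ U) : 0 < 1 - occProb G lam U v := by
  rw [one_sub_occProb hlam hv]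
  exact div_pos (partitionOn_pos hlam _) (partitionOn_pos hlam U)

lemma occProb_le (hlam : 0 < lam) (hv : v ∈ U) : occProb G lam U v ≤ lam / (1 + lam) := by
  rw [occProb_eq hv, div_le_div_iff₀ (partitionOn_pos hlam U) (by positivity),
    partitionOn_eq_add hv]
  have hmono := partitionOn_mono (G := G) hlam (awayFrom_subset_erase (G := G) (U := U) (v := v))
  linarith [mul_le_mul_of_nonneg_left hmono hlam.le]

lemma expOn_eq_add (hlam : 0 < lam) (hv : v ∈ U) (f : Finset V → ℝ) :
    expOn G lam U f = occProb G lam U v * expOn G lam (awayFrom G U v) (f ∘ insert v) +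
      (1 - occProb G lam U v) * expOn G lam (U.erase v) f := by
  have hU := (partitionOn_pos (G := G) hlam U).ne'
  have herase := (partitionOn_pos (G := G) hlam (U.erase v)).ne'
  have haway := (partitionOn_pos (G := G) hlam (awayFrom G U v)).ne'
  rw [one_sub_occProb hlam hv, occProb_eq hv, expOn_apply, sum_hardcoreWeight_mul hv, expOn_apply,
    expOn_apply]
  simp only [Function.comp_apply]
  field_simp
  ring

end InducedHardcore

section PinEffect

variable {V : Type*} [DecidableEq V] {G : SimpleGraph V} {lam : ℝ} {U : Finset V} {u v : V}

/-- The change of the mean of `f` in the subgraph induced on `U` when `v` goes from unoccupied to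
occupied. For `f = occ u` this is the influence of `v` on `u`. -/
def pinEffect (G : SimpleGraph V) (lam : ℝ) (U : Finset V) (v : V) (f : Finset V → ℝ) : ℝ :=
  expOn G lam (awayFrom G U v) (f ∘ insert v) - expOn G lam (U.erase v) f

lemma expOn_erase_sub (hlam : 0 < lam) (hv : v ∈ U) (f : Finset V → ℝ) :
    expOn G lam (U.erase v) f - expOn G lam U f = -(occProb G lam U v * pinEffect G lam U v f) := by
  rw [expOn_eq_add hlam hv f, pinEffect]
  ring

lemma covForm_expOn_self (hlam : 0 < lam) (hv : v ∈ U) (f : Finset V → ℝ) :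
    covForm (expOn G lam U) f f =
      occProb G lam U v * covForm (expOn G lam (awayFrom G U v)) (f ∘ insert v) (f ∘ insert v) +
      (1 - occProb G lam U v) * covForm (expOn G lam (U.erase v)) f f +
      occProb G lam U v * (1 - occProb G lam U v) * pinEffect G lam U v f ^ 2 := by
  rw [covForm_apply, covForm_apply, covForm_apply, expOn_eq_add hlam hv, expOn_eq_add hlam hv f,
    pinEffect, Pi.mul_comp]
  ring

lemma occ_comp_insert_self : occ v ∘ insert v = 1 := by
  funext S; simp [occ]

lemma occ_comp_insert_of_ne (h : u ≠ v) : occ u ∘ insert v = occ u := by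
  funext S; simp [occ, h]

lemma covForm_expOn_occ (hlam : 0 < lam) (hv : v ∈ U) (f : Finset V → ℝ) :
    covForm (expOn G lam U) (occ v) f =
      occProb G lam U v * (1 - occProb G lam U v) * pinEffect G lam U v f := by
  have herase : expOn G lam (U.erase v) (occ v * f) = 0 := by
    rw [expOn_congr (g := 0), map_zero]
    intro S hS
    rw [Pi.mul_apply, occ, if_neg fun h => notMem_erase v U (hS h), zero_mul, Pi.zero_apply]
  have hpin : (occ v * f) ∘ insert v = f ∘ insert v := by
    rw [Pi.mul_comp, occ_comp_insert_self, one_mul]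
  rw [covForm_apply, expOn_eq_add hlam hv (occ v * f), herase, hpin, ← occProb,
    expOn_eq_add hlam hv f, pinEffect]
  ring

end PinEffect

section Influence

variable {V : Type*} [Fintype V] [DecidableEq V] {G : SimpleGraph V} {lam K : ℝ}
  {H U W : Finset V} {v w : V}

/-- The total influence of `v` on all vertices, itself included, in the subgraph induced on `U`. -/
def totalInfluence (G : SimpleGraph V) (lam : ℝ) (U : Finset V) (v : V) : ℝ :=
  ∑ u, |pinEffect G lam U v (occ u)|

lemma totalInfluence_le_one_add (hlam : 0 < lam) (U : Finset V) (v : V) :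
    totalInfluence G lam U v ≤
      1 + ∑ u, |occProb G lam (awayFrom G U v) u - occProb G lam (U.erase v) u| := by
  have hterm (u : V) : |pinEffect G lam U v (occ u)| ≤ (if u = v then 1 else 0) +
      |occProb G lam (awayFrom G U v) u - occProb G lam (U.erase v) u| := by
    split_ifs with h
    · rw [h, pinEffect, occ_comp_insert_self, expOn_one hlam, ← occProb,
        occProb_eq_zero (notMem_erase v U), sub_zero, abs_one]
      exact le_add_of_nonneg_right (abs_nonneg _)
    · rw [pinEffect, occ_comp_insert_of_ne h, zero_add, occProb, occProb]
  refine (sum_le_sum fun u _ => hterm u).trans_eq ?_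
  rw [sum_add_distrib, sum_ite_eq' univ v, if_pos (mem_univ v)]

lemma sum_abs_occProb_erase_sub (hlam : 0 < lam) (hw : w ∈ U) :
    ∑ u, |occProb G lam (U.erase w) u - occProb G lam U u| =
      occProb G lam U w * totalInfluence G lam U w := by
  rw [totalInfluence, mul_sum]
  refine sum_congr rfl fun u _ => ?_
  rw [occProb, occProb, expOn_erase_sub hlam hw, abs_neg, abs_mul,
    abs_of_pos (occProb_pos hlam hw)]

/-- The vertices of `W` are deleted one after the other, and `q w` is the occupation probability of
`w` at the time of its deletion. -/
lemma exists_occProb_sdiff (hlam : 0 < lam) (hWH : W ⊆ H)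
    (hK : ∀ H' ⊆ H, ∀ w ∈ W, w ∈ H' →
      √(occProb G lam H' w) * totalInfluence G lam H' w ≤ K) :
    ∃ q : V → ℝ, (∀ w ∈ W, 0 ≤ q w ∧ q w ≤ lam / (1 + lam)) ∧
      ∏ w ∈ W, (1 - q w) = partitionOn G lam (H \ W) / partitionOn G lam H ∧
      ∑ u, |occProb G lam (H \ W) u - occProb G lam H u| ≤ K * ∑ w ∈ W, √(q w) := by
  induction W using Finset.induction_on with
  | empty =>
    refine ⟨0, by simp only [notMem_empty, false_imp_iff, implies_true], ?_, ?_⟩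
    · rw [prod_empty, sdiff_empty, div_self (partitionOn_pos hlam H).ne']
    · simp only [sdiff_empty, sub_self, abs_zero, sum_const_zero, sum_empty, mul_zero, le_refl]
  | insert w W hw ih =>
    obtain ⟨q, hq, hprod, hsum⟩ := ih ((subset_insert _ _).trans hWH)
      fun H' hH' x hx => hK H' hH' x (mem_insert_of_mem hx)
    have hwH : w ∈ H \ W := mem_sdiff.2 ⟨hWH (mem_insert_self _ _), hw⟩
    set p := occProb G lam (H \ W) w with hp
    have hp0 : 0 < p := occProb_pos hlam hwH
    have hold : ∀ x ∈ W, Function.update q w p x = q x := fun x hx =>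
      Function.update_of_ne (ne_of_mem_of_not_mem hx hw) _ _
    refine ⟨Function.update q w p, ?_, ?_, ?_⟩
    · rw [forall_mem_insert, Function.update_self]
      exact ⟨⟨hp0.le, occProb_le hlam hwH⟩, fun x hx => (hold x hx).symm ▸ hq x hx⟩
    · rw [prod_insert hw, prod_congr rfl fun x hx => by rw [hold x hx], hprod,
        Function.update_self, one_sub_occProb hlam hwH, sdiff_insert,
        div_mul_div_cancel₀ (partitionOn_pos hlam _).ne']
    · have hdelete : ∑ u, |occProb G lam ((H \ W).erase w) u - occProb G lam (H \ W) u| ≤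
          K * √p := by
        calc _ = √p * totalInfluence G lam (H \ W) w * √p := by
              rw [sum_abs_occProb_erase_sub hlam hwH, ← hp, mul_right_comm,
                Real.mul_self_sqrt hp0.le]
          _ ≤ K * √p := by
              gcongr
              exact hK _ sdiff_subset w (mem_insert_self _ _) hwH
      rw [sum_insert hw, sum_congr (s₁ := W) rfl fun x hx => by rw [hold x hx],
        Function.update_self, sdiff_insert, mul_add]
      refine le_trans ?_ (add_le_add hdelete hsum)
      rw [← sum_add_distrib]
      exact sum_le_sum fun u _ => abs_sub_le _ _ _

end Influence

section UniquenessThreshold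

variable {d : ℕ}

lemma lamC_succ (d : ℕ) : lamC (d + 1) = (d : ℝ) ^ d / ((d : ℝ) - 1) ^ (d + 1) := by
  rw [lamC, Nat.add_sub_cancel]
  push_cast
  ring_nf

lemma lamC_pos {Δ : ℕ} (hΔ : 3 ≤ Δ) : 0 < lamC Δ := by
  have hΔ3 : (3 : ℝ) ≤ Δ := by exact_mod_cast hΔ
  exact div_pos (pow_pos (by linarith) _) (pow_pos (by linarith) _)

lemma div_sub_one_pow_le (hd : 2 ≤ d) : ((d : ℝ) / (d - 1)) ^ d ≤ 9 := by
  have hd2 : (2 : ℝ) ≤ d := by exact_mod_cast hd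
  have hd1 : (0 : ℝ) < d - 1 := by linarith
  have hbase : (d : ℝ) / (d - 1) ≤ Real.exp (1 / (d - 1)) := calc
    (d : ℝ) / (d - 1) = 1 / (d - 1) + 1 := by field_simp; ring
    _ ≤ Real.exp (1 / (d - 1)) := Real.add_one_le_exp _
  have hexponent : d * (1 / ((d : ℝ) - 1)) ≤ 2 := by
    rw [mul_one_div, div_le_iff₀ hd1]
    linarith
  calc ((d : ℝ) / (d - 1)) ^ d ≤ Real.exp (1 / (d - 1)) ^ d := by gcongr
    _ = Real.exp (d * (1 / (d - 1))) := (Real.exp_nat_mul _ _).symm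
    _ ≤ Real.exp 2 := Real.exp_le_exp.2 hexponent
    _ = Real.exp 1 ^ 2 := by rw [← Real.exp_nat_mul]; norm_num
    _ ≤ 3 ^ 2 := by gcongr; linarith [Real.exp_one_lt_d9]
    _ = 9 := by norm_num

lemma lamC_succ_mul_le (hd : 2 ≤ d) : lamC (d + 1) * (d + 1) ≤ 27 := by
  have hd2 : (2 : ℝ) ≤ d := by exact_mod_cast hd
  have hd1 : (0 : ℝ) < d - 1 := by linarith
  have hratio : ((d : ℝ) + 1) / (d - 1) ≤ 3 := by
    rw [div_le_iff₀ hd1]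
    linarith
  calc lamC (d + 1) * (d + 1) = ((d : ℝ) / (d - 1)) ^ d * ((d + 1) / (d - 1)) := by
        rw [lamC_succ, div_pow]
        field_simp
        ring
    _ ≤ 9 * 3 := by
        gcongr
        exact div_sub_one_pow_le hd
    _ = 27 := by norm_num

end UniquenessThreshold

section Contraction

variable {ι : Type*} {W : Finset ι} {q : ι → ℝ} {d : ℕ} {lam δ : ℝ}

/-- Equality holds at the fixed point `q = 1 / d` of the tree recursion at criticality, which
dictates the points where the exponential is linearised. -/
lemma lamC_succ_mul_prod_one_sub_le (hd : 2 ≤ d) (hW : #W ≤ d) (hq : ∀ w ∈ W, q w ≤ 1) :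
    lamC (d + 1) * ((∏ w ∈ W, (1 - q w)) * (d * ∑ w ∈ W, q w - 1)) ≤ 1 := by
  have hd2 : (2 : ℝ) ≤ d := by exact_mod_cast hd
  have hd1 : (0 : ℝ) < d - 1 := by linarith
  set b : ℝ := d / (d - 1) with hb
  set y : ℝ := (d * ∑ w ∈ W, q w - 1) / (d - 1) with hy
  have hb0 : 0 < b := by positivity
  have le_exp (x : ℝ) : x ≤ Real.exp (x - 1) := by linarith [Real.add_one_le_exp (x - 1)]
  have hfactor0 : ∀ w ∈ W, 0 ≤ b * (1 - q w) := fun w hw =>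
    mul_nonneg hb0.le (sub_nonneg.2 (hq w hw))
  have hprod : ∏ w ∈ W, b * (1 - q w) ≤ Real.exp (∑ w ∈ W, (b * (1 - q w) - 1)) := by
    rw [Real.exp_sum]
    exact prod_le_prod hfactor0 fun w _ => le_exp _
  have hpad : b ^ (d - #W) ≤ Real.exp ((d - #W : ℕ) * (b - 1)) := by
    rw [Real.exp_nat_mul]
    exact pow_le_pow_left₀ hb0.le (le_exp b) _
  have hexponent : ∑ w ∈ W, (b * (1 - q w) - 1) + (d - #W : ℕ) * (b - 1) + (y - 1) = 0 := by
    rw [sum_sub_distrib, ← mul_sum, sum_sub_distrib, sum_const, nsmul_eq_mul, mul_one,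
      Nat.cast_sub hW, hy, hb]
    field_simp
    ring
  calc lamC (d + 1) * ((∏ w ∈ W, (1 - q w)) * (d * ∑ w ∈ W, q w - 1))
      = b ^ d * (∏ w ∈ W, (1 - q w)) * y := by
        rw [lamC_succ, hb, hy, div_pow, pow_succ]
        field_simp
    _ = (∏ w ∈ W, b * (1 - q w)) * b ^ (d - #W) * y := by
        rw [prod_mul_distrib, prod_const, mul_right_comm _ _ (b ^ (d - #W)), ← pow_add,
          Nat.add_sub_cancel' hW]
    _ ≤ Real.exp (∑ w ∈ W, (b * (1 - q w) - 1)) * Real.exp ((d - #W : ℕ) * (b - 1)) *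
          Real.exp (y - 1) := by
        have hprod0 := prod_nonneg hfactor0
        exact (mul_le_mul_of_nonneg_left (le_exp y) (by positivity)).trans (by gcongr)
    _ = 1 := by rw [← Real.exp_add, ← Real.exp_add, hexponent, Real.exp_zero]

lemma one_sub_pos_of_le_threshold (hd : 2 ≤ d) (hlam : 0 < lam)
    (hcrit : lam ≤ (1 - δ) * lamC (d + 1)) : 0 < 1 - δ :=
  pos_of_mul_pos_left (hlam.trans_le hcrit) (lamC_pos (Nat.succ_le_succ hd)).le

lemma mul_add_one_le_of_le_threshold (hd : 2 ≤ d) (hδ : 0 < δ)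
    (hcrit : lam ≤ (1 - δ) * lamC (d + 1)) : lam * (d + 1) ≤ 27 := by
  have hlamC := lamC_pos (Nat.succ_le_succ hd)
  calc lam * (d + 1) ≤ lamC (d + 1) * (d + 1) := by gcongr; nlinarith
    _ ≤ 27 := lamC_succ_mul_le hd

lemma le_nine_of_le_threshold (hd : 2 ≤ d) (hδ : 0 < δ)
    (hcrit : lam ≤ (1 - δ) * lamC (d + 1)) : lam ≤ 9 := by
  have hd2 : (2 : ℝ) ≤ d := by exact_mod_cast hd
  nlinarith [mul_add_one_le_of_le_threshold hd hδ hcrit]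

lemma lam_mul_prod_one_sub_le (hd : 2 ≤ d) (hW : #W ≤ d) (hq : ∀ w ∈ W, q w ≤ 1)
    (hlam : 0 < lam) (hcrit : lam ≤ (1 - δ) * lamC (d + 1)) :
    lam * ((∏ w ∈ W, (1 - q w)) * (d * ∑ w ∈ W, q w - 1)) ≤ 1 - δ := by
  have hextremal := lamC_succ_mul_prod_one_sub_le hd hW hq
  have hδ : 0 < 1 - δ := one_sub_pos_of_le_threshold hd hlam hcrit
  set X := (∏ w ∈ W, (1 - q w)) * (d * ∑ w ∈ W, q w - 1)
  rcases le_total X 0 with hX | hX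
  · exact (mul_nonpos_of_nonneg_of_nonpos hlam.le hX).trans hδ.le
  · calc lam * X ≤ (1 - δ) * lamC (d + 1) * X := by gcongr
      _ = (1 - δ) * (lamC (d + 1) * X) := mul_assoc _ _ _
      _ ≤ 1 - δ := mul_le_of_le_one_right hδ.le hextremal

lemma sq_sum_sqrt_le (hW : #W ≤ d) (hq : ∀ w ∈ W, 0 ≤ q w) :
    (∑ w ∈ W, √(q w)) ^ 2 ≤ d * ∑ w ∈ W, q w := calc
  (∑ w ∈ W, √(q w)) ^ 2 ≤ #W * ∑ w ∈ W, √(q w) ^ 2 := sq_sum_le_card_mul_sum_sq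
  _ = #W * ∑ w ∈ W, q w := by rw [sum_congr rfl fun w hw => Real.sq_sqrt (hq w hw)]
  _ ≤ d * ∑ w ∈ W, q w := by
    have := sum_nonneg hq
    gcongr

lemma sqrt_mul_sum_sqrt_le (hd : 2 ≤ d) (hW : #W ≤ d) (hq : ∀ w ∈ W, 0 ≤ q w ∧ q w ≤ 1)
    (hlam : 0 < lam) (hδ : 0 < δ) (hcrit : lam ≤ (1 - δ) * lamC (d + 1)) {R : ℝ}
    (hR : R = lam * ∏ w ∈ W, (1 - q w)) :
    √(R / (1 + R)) * ∑ w ∈ W, √(q w) ≤ 1 - δ / 20 := by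
  have hδ1 := one_sub_pos_of_le_threshold hd hlam hcrit
  have hprod0 : 0 ≤ ∏ w ∈ W, (1 - q w) := prod_nonneg fun w hw => sub_nonneg.2 (hq w hw).2
  have hprod1 : ∏ w ∈ W, (1 - q w) ≤ 1 :=
    prod_le_one (fun w hw => sub_nonneg.2 (hq w hw).2) fun w hw => sub_le_self _ (hq w hw).1
  have hR0 : 0 ≤ R := by rw [hR]; positivity
  have hR9 : R ≤ 9 := hR ▸
    (mul_le_of_le_one_right hlam.le hprod1).trans (le_nine_of_le_threshold hd hδ hcrit)
  have hextremal : R * (d * ∑ w ∈ W, q w - 1) ≤ 1 - δ := by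
    rw [hR, mul_assoc]
    exact lam_mul_prod_one_sub_le hd hW (fun w hw => (hq w hw).2) hlam hcrit
  refine le_of_sq_le_sq ?_ (by linarith)
  calc (√(R / (1 + R)) * ∑ w ∈ W, √(q w)) ^ 2
      = R * (∑ w ∈ W, √(q w)) ^ 2 / (1 + R) := by
        rw [mul_pow, Real.sq_sqrt (by positivity), div_mul_eq_mul_div]
    _ ≤ R * (d * ∑ w ∈ W, q w) / (1 + R) := by
        gcongr
        exact sq_sum_sqrt_le hW fun w hw => (hq w hw).1
    _ ≤ (R + (1 - δ)) / (1 + R) := by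
        gcongr
        linarith
    _ ≤ (1 - δ / 20) ^ 2 := by
        rw [div_le_iff₀ (by positivity)]
        nlinarith [sq_nonneg δ]

end Contraction

section Neighbors

variable {V : Type*} [Finite V] {G : SimpleGraph V} {U : Finset V} {v w : V}

lemma card_filter_adj_le (U : Finset V) (v : V) :
    #{u ∈ U | G.Adj v u} ≤ (G.neighborSet v).ncard := by
  rw [← Set.ncard_coe_finset]
  exact Set.ncard_le_ncard fun u hu => (mem_filter.1 hu).2

lemma card_filter_adj_lt (hadj : G.Adj w v) (hv : v ∉ U) :
    #{u ∈ U | G.Adj w u} < (G.neighborSet w).ncard := by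
  rw [← Set.ncard_coe_finset]
  refine Set.ncard_lt_ncard ((Set.ssubset_iff_of_subset fun u hu => (mem_filter.1 hu).2).2 ?_)
  exact ⟨v, hadj, fun h => hv (mem_filter.1 h).1⟩

end Neighbors

section SpectralIndependence

variable {V : Type*} [DecidableEq V] {G : SimpleGraph V} {lam δ η : ℝ} {d : ℕ}
  {H U : Finset V} {v w : V}

lemma filter_adj_subset_erase (U : Finset V) (v : V) : {u ∈ U | G.Adj v u} ⊆ U.erase v :=
  fun _ hu => mem_erase.2 ⟨(mem_filter.1 hu).2.ne', (mem_filter.1 hu).1⟩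

lemma erase_sdiff_filter_adj (U : Finset V) (v : V) :
    U.erase v \ {u ∈ U | G.Adj v u} = awayFrom G U v := by
  ext u
  simp only [awayFrom, mem_sdiff, mem_erase, mem_filter]
  tauto

lemma occProb_eq_div_one_add (hlam : 0 < lam) (hv : v ∈ U) {R : ℝ}
    (hR : R = lam * (partitionOn G lam (awayFrom G U v) / partitionOn G lam (U.erase v))) :
    occProb G lam U v = R / (1 + R) := by
  have herase := partitionOn_pos (G := G) hlam (U.erase v)
  have haway := partitionOn_pos (G := G) hlam (awayFrom G U v)
  rw [occProb_eq hv, partitionOn_eq_add hv, hR]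
  field_simp

lemma card_filter_adj_le_of_subset_erase [Finite V] (hdeg : (G.neighborSet w).ncard ≤ d + 1)
    (hw : w ∈ ({u ∈ U | G.Adj v u} : Finset V)) (hH : H ⊆ U.erase v) :
    #{u ∈ H | G.Adj w u} ≤ d :=
  Nat.le_of_lt_succ <| (card_filter_adj_lt (mem_filter.1 hw).2.symm
    fun h => notMem_erase v U (hH h)).trans_le hdeg

variable [Fintype V]

/-- A vertex one of whose neighbours has been deleted satisfies the degree hypothesis again, so the
induction closes with the branching number `d` rather than the maximum degree `d + 1`. -/
lemma sqrt_occProb_mul_totalInfluence_le (hd : 2 ≤ d)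
    (hdeg : ∀ v, (G.neighborSet v).ncard ≤ d + 1) (hlam : 0 < lam) (hδ : 0 < δ)
    (hcrit : lam ≤ (1 - δ) * lamC (d + 1)) (hv : v ∈ U) (hUv : #{u ∈ U | G.Adj v u} ≤ d) :
    √(occProb G lam U v) * totalInfluence G lam U v ≤ √(lam / (1 + lam)) * (20 / δ) := by
  induction U using Finset.strongInduction generalizing v with
  | H U ih =>
    set K := √(lam / (1 + lam)) * (20 / δ) with hK
    obtain ⟨q, hq, hprod, hsum⟩ := exists_occProb_sdiff (K := K) hlam
      (filter_adj_subset_erase (G := G) U v) fun H' hH' w hw hwH' =>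
        ih H' (hH'.trans_ssubset (erase_ssubset hv)) hwH'
          (card_filter_adj_le_of_subset_erase (hdeg w) hw hH')
    rw [erase_sdiff_filter_adj] at hprod hsum
    have hlam1 : lam / (1 + lam) ≤ 1 := (div_le_one (by positivity)).2 (by linarith)
    have hcontract := sqrt_mul_sum_sqrt_le hd hUv
      (fun w hw => ⟨(hq w hw).1, (hq w hw).2.trans hlam1⟩) hlam hδ hcrit rfl
    rw [hprod, ← occProb_eq_div_one_add hlam hv rfl] at hcontract
    calc √(occProb G lam U v) * totalInfluence G lam U v
        ≤ √(occProb G lam U v) * (1 + K * ∑ w ∈ U with G.Adj v w, √(q w)) := by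
          gcongr
          linarith [totalInfluence_le_one_add (G := G) hlam U v]
      _ = √(occProb G lam U v) + K * (√(occProb G lam U v) * ∑ w ∈ U with G.Adj v w, √(q w)) := by
          ring
      _ ≤ √(lam / (1 + lam)) + K * (1 - δ / 20) := by
          gcongr
          exact occProb_le hlam hv
      _ = K := by rw [hK]; field_simp; ring

theorem totalInfluence_le_of_le_threshold (hd : 2 ≤ d)
    (hdeg : ∀ v, (G.neighborSet v).ncard ≤ d + 1) (hlam : 0 < lam) (hδ : 0 < δ)
    (hcrit : lam ≤ (1 - δ) * lamC (d + 1)) (U : Finset V) (v : V) :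
    totalInfluence G lam U v ≤ 541 / δ := by
  set K := √(lam / (1 + lam)) * (20 / δ) with hK
  obtain ⟨q, hq, -, hsum⟩ := exists_occProb_sdiff (K := K) hlam
    (filter_adj_subset_erase (G := G) U v) fun H' hH' w hw hwH' =>
      sqrt_occProb_mul_totalInfluence_le hd hdeg hlam hδ hcrit hwH'
        (card_filter_adj_le_of_subset_erase (hdeg w) hw hH')
  rw [erase_sdiff_filter_adj] at hsum
  have hcard : (#{u ∈ U | G.Adj v u} : ℝ) ≤ d + 1 := by
    exact_mod_cast (card_filter_adj_le U v).trans (hdeg v)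
  have hsqrt : ∑ w ∈ U with G.Adj v w, √(q w) ≤ (d + 1) * √(lam / (1 + lam)) := by
    refine (sum_le_card_nsmul _ _ _ fun w hw => Real.sqrt_le_sqrt (hq w hw).2).trans ?_
    rw [nsmul_eq_mul]
    gcongr
  have hodds : (d + 1) * (lam / (1 + lam)) ≤ 27 := by
    rw [mul_div_assoc', div_le_iff₀ (by positivity)]
    linarith [mul_add_one_le_of_le_threshold hd hδ hcrit]
  have hδ1 : 1 ≤ 1 / δ :=
    (one_le_div hδ).2 (by linarith [one_sub_pos_of_le_threshold hd hlam hcrit])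
  calc totalInfluence G lam U v
      ≤ 1 + K * ((d + 1) * √(lam / (1 + lam))) := by
        linarith [totalInfluence_le_one_add (G := G) hlam U v,
          mul_le_mul_of_nonneg_left hsqrt (show 0 ≤ K by positivity)]
    _ = 1 + 20 / δ * ((d + 1) * (√(lam / (1 + lam)) * √(lam / (1 + lam)))) := by
        rw [hK]; ring
    _ ≤ 1 / δ + 20 / δ * 27 := by
        rw [Real.mul_self_sqrt (by positivity)]
        gcongr
    _ = 541 / δ := by ring

theorem sum_pinEffect_sq_le (hlam : 0 < lam) (hη : 0 < η)
    (hinfluence : ∀ v ∈ U, totalInfluence G lam U v ≤ η) (f : Finset V → ℝ) :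
    ∑ v ∈ U, occProb G lam U v * (1 - occProb G lam U v) * pinEffect G lam U v f ^ 2 ≤
      η * covForm (expOn G lam U) f f := by
  set s : V → ℝ := fun v => occProb G lam U v * (1 - occProb G lam U v) with hs
  have hs0 : ∀ v ∈ U, 0 < s v := fun v hv =>
    mul_pos (occProb_pos hlam hv) (one_sub_occProb_pos hlam hv)
  have hrow : ∀ v ∈ U, ∑ u ∈ U, |covForm (expOn G lam U) (occ v) (occ u)| ≤ η * s v := by
    intro v hv
    calc ∑ u ∈ U, |covForm (expOn G lam U) (occ v) (occ u)|
        ≤ ∑ u, |covForm (expOn G lam U) (occ v) (occ u)| :=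
          sum_le_sum_of_subset_of_nonneg (subset_univ U) fun _ _ _ => abs_nonneg _
      _ = s v * totalInfluence G lam U v := by
          simp only [totalInfluence, mul_sum, covForm_expOn_occ hlam hv, abs_mul,
            abs_of_pos (occProb_pos hlam hv), abs_of_pos (one_sub_occProb_pos hlam hv), hs]
      _ ≤ η * s v := by
          rw [mul_comm η]
          exact mul_le_mul_of_nonneg_left (hinfluence v hv) (hs0 v hv).le
  have hselberg := selberg_inequality (covForm_expOn_isPosSemidef hlam U) U occ hrow f
  have hterm : ∀ v ∈ U, covForm (expOn G lam U) (occ v) f ^ 2 / (η * s v) =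
      s v * pinEffect G lam U v f ^ 2 / η := by
    intro v hv
    have hsv := (hs0 v hv).ne'
    rw [covForm_expOn_occ hlam hv]
    change (s v * pinEffect G lam U v f) ^ 2 / (η * s v) = _
    field_simp
  rwa [sum_congr rfl hterm, ← sum_div, div_le_iff₀' hη] at hselberg

end SpectralIndependence

section DirichletForm

variable {V : Type*} [DecidableEq V] {G : SimpleGraph V} {lam : ℝ} {U : Finset V} {j v : V}

/-- A random variable whose mean is the expected conditional variance of `f` given the
configuration off `j`. The pair `{S.erase j, S}` is charged to the occupied state `S`: its masses
have ratio `1 : lam` if `S` is independent, and otherwise `S` has mass zero. -/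
def localForm (lam : ℝ) (j : V) (f : Finset V → ℝ) (S : Finset V) : ℝ :=
  if j ∈ S then (f S - f (S.erase j)) ^ 2 / (1 + lam) else 0

/-- The Dirichlet form of the Glauber dynamics on the subgraph induced on `U`, sped up by the factor
`#U`. -/
def dirichletOn (G : SimpleGraph V) (lam : ℝ) (U : Finset V) (f : Finset V → ℝ) : ℝ :=
  ∑ j ∈ U, expOn G lam U (localForm lam j f)

lemma localForm_nonneg (hlam : 0 < lam) (j : V) (f : Finset V → ℝ) : 0 ≤ localForm lam j f := by
  intro S
  rw [Pi.zero_apply, localForm]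
  split_ifs <;> positivity

lemma localForm_comp_insert (hjv : j ≠ v) (f : Finset V → ℝ) :
    localForm lam j f ∘ insert v = localForm lam j (f ∘ insert v) := by
  funext S
  simp only [localForm, Function.comp_apply, mem_insert, hjv, false_or,
    erase_insert_of_ne hjv.symm]

lemma expOn_localForm_of_notMem (hj : j ∉ U) (f : Finset V → ℝ) :
    expOn G lam U (localForm lam j f) = 0 := by
  rw [expOn_congr (g := 0), map_zero]
  exact fun S hS => if_neg fun h => hj (hS h)

lemma expOn_localForm_self (hlam : 0 < lam) (hv : v ∈ U) (f : Finset V → ℝ) :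
    expOn G lam U (localForm lam v f) =
      occProb G lam U v * expOn G lam (awayFrom G U v) (fun S => (f (insert v S) - f S) ^ 2) /
        (1 + lam) := by
  have hinsert : expOn G lam (awayFrom G U v) (localForm lam v f ∘ insert v) =
      expOn G lam (awayFrom G U v) ((1 + lam)⁻¹ • fun S => (f (insert v S) - f S) ^ 2) :=
    expOn_congr fun S hS => by
      rw [Function.comp_apply, localForm, if_pos (mem_insert_self v S),
        erase_insert fun h => notMem_awayFrom (hS h), Pi.smul_apply, smul_eq_mul, inv_mul_eq_div]
  rw [expOn_eq_add hlam hv, expOn_localForm_of_notMem (notMem_erase v U), hinsert, map_smul,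
    smul_eq_mul, inv_mul_eq_div, mul_zero, add_zero, mul_div_assoc]

lemma dirichletOn_nonneg (hlam : 0 < lam) (U : Finset V) (f : Finset V → ℝ) :
    0 ≤ dirichletOn G lam U f :=
  sum_nonneg fun j _ => expOn_nonneg hlam (localForm_nonneg hlam j f)

lemma dirichletOn_eq_add (hlam : 0 < lam) (hv : v ∈ U) (f : Finset V → ℝ) :
    dirichletOn G lam U f = expOn G lam U (localForm lam v f) +
      (occProb G lam U v * dirichletOn G lam (awayFrom G U v) (f ∘ insert v) +
        (1 - occProb G lam U v) * dirichletOn G lam (U.erase v) f) := by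
  have haway : dirichletOn G lam (awayFrom G U v) (f ∘ insert v) =
      ∑ j ∈ U.erase v, expOn G lam (awayFrom G U v) (localForm lam j f ∘ insert v) := by
    rw [sum_congr rfl fun j hj => by rw [localForm_comp_insert (ne_of_mem_erase hj)], dirichletOn]
    exact sum_subset awayFrom_subset_erase fun j _ hj => expOn_localForm_of_notMem hj _
  rw [haway, dirichletOn, dirichletOn, ← add_sum_erase _ _ hv, mul_sum, mul_sum,
    ← sum_add_distrib]
  exact congr_arg _ (sum_congr rfl fun j _ => expOn_eq_add hlam hv _)

end DirichletForm

section CrudePoincare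

variable {V : Type*} [DecidableEq V] {G : SimpleGraph V} {lam : ℝ} {U : Finset V} {v : V}

lemma occProb_mul_expOn_awayFrom_le (hlam : 0 < lam) (hv : v ∈ U) {g : Finset V → ℝ}
    (hg : 0 ≤ g) :
    occProb G lam U v * expOn G lam (awayFrom G U v) g ≤
      lam * ((1 - occProb G lam U v) * expOn G lam (U.erase v) g) := by
  have hU := partitionOn_pos (G := G) hlam U
  have herase := partitionOn_pos (G := G) hlam (U.erase v)
  have haway := partitionOn_pos (G := G) hlam (awayFrom G U v)
  have hsum : ∑ S ∈ (awayFrom G U v).powerset, hardcoreWeight G lam S * g S ≤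
      ∑ S ∈ (U.erase v).powerset, hardcoreWeight G lam S * g S :=
    sum_le_sum_of_subset_of_nonneg (powerset_mono.2 awayFrom_subset_erase)
      fun S _ _ => mul_nonneg (hardcoreWeight_nonneg hlam S) (hg S)
  rw [one_sub_occProb hlam hv, occProb_eq hv, expOn_apply, expOn_apply,
    div_mul_div_comm, div_mul_div_comm, mul_right_comm, mul_div_mul_right _ _ haway.ne',
    mul_comm (partitionOn G lam (U.erase v)), mul_div_mul_right _ _ herase.ne', ← mul_div_assoc]
  gcongr

lemma covForm_expOn_le_add (hlam : 0 < lam) (hv : v ∈ U) (f : Finset V → ℝ) :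
    covForm (expOn G lam U) f f ≤ 2 * (1 + lam) * expOn G lam U (localForm lam v f) +
      (1 + 2 * lam) * ((1 - occProb G lam U v) * covForm (expOn G lam (U.erase v)) f f) := by
  set c := expOn G lam (U.erase v) f with hc
  set A := awayFrom G U v
  set p := occProb G lam U v
  have herase : expOn G lam (U.erase v) (fun S => (f S - c) ^ 2) =
      covForm (expOn G lam (U.erase v)) f f := by
    rw [expectation_sub_const_sq (expOn_one hlam), ← hc, sub_self, zero_pow two_ne_zero, add_zero]
  have hsplit : (fun S => (f S - c) ^ 2) ∘ insert v ≤
      (2 : ℝ) • (fun S => (f (insert v S) - f S) ^ 2) + (2 : ℝ) • fun S => (f S - c) ^ 2 := by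
    intro S
    simp only [Function.comp_apply, Pi.add_apply, Pi.smul_apply, smul_eq_mul]
    nlinarith [sq_nonneg (f (insert v S) - f S - (f S - c))]
  have haway : p * expOn G lam A ((fun S => (f S - c) ^ 2) ∘ insert v) ≤
      2 * (p * expOn G lam A (fun S => (f (insert v S) - f S) ^ 2)) +
        2 * (p * expOn G lam A (fun S => (f S - c) ^ 2)) := by
    have := mul_le_mul_of_nonneg_left (expOn_mono (G := G) (U := A) hlam hsplit)
      (occProb_pos (G := G) hlam hv).le
    rw [map_add, map_smul, map_smul, smul_eq_mul, smul_eq_mul] at this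
    linarith
  have hcompare : p * expOn G lam A (fun S => (f S - c) ^ 2) ≤
      lam * ((1 - p) * covForm (expOn G lam (U.erase v)) f f) :=
    herase ▸ occProb_mul_expOn_awayFrom_le hlam hv fun S => sq_nonneg _
  have hlocal : p * expOn G lam A (fun S => (f (insert v S) - f S) ^ 2) =
      (1 + lam) * expOn G lam U (localForm lam v f) := by
    rw [expOn_localForm_self hlam hv, mul_div_cancel₀ _ (by positivity)]
  have hmean := covForm_self_le (expOn_one (G := G) (U := U) hlam) f c
  rw [expOn_eq_add hlam hv, herase] at hmean
  linarith

theorem covForm_expOn_le_pow_card (hlam : 0 < lam) (U : Finset V) (f : Finset V → ℝ) :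
    covForm (expOn G lam U) f f ≤ (2 * (1 + lam)) ^ #U * dirichletOn G lam U f := by
  induction U using Finset.induction_on with
  | empty => simp [covForm_apply, expOn_apply, partitionOn, hardcoreWeight, dirichletOn]
  | insert v U hv ih =>
    have hmem : v ∈ insert v U := mem_insert_self v U
    set D := dirichletOn G lam U f
    have hq := (one_sub_occProb_pos (G := G) hlam hmem).le
    have hp := (occProb_pos (G := G) hlam hmem).le
    have hlocal := expOn_nonneg (G := G) (U := insert v U) hlam (localForm_nonneg hlam v f)
    have hcov := (covForm_expOn_isPosSemidef (G := G) hlam U).nonneg f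
    have hA := dirichletOn_nonneg (G := G) hlam (awayFrom G (insert v U) v) (f ∘ insert v)
    have hcrude := covForm_expOn_le_add (G := G) hlam hmem f
    have hsplit := dirichletOn_eq_add (G := G) hlam hmem f
    rw [erase_insert hv] at hcrude hsplit
    set p := occProb G lam (insert v U) v
    set E := expOn G lam (insert v U) (localForm lam v f)
    rw [card_insert_of_notMem hv]
    calc covForm (expOn G lam (insert v U)) f f
        ≤ 2 * (1 + lam) * E + (1 + 2 * lam) * ((1 - p) * covForm (expOn G lam U) f f) := hcrude
      _ ≤ (2 * (1 + lam)) ^ (#U + 1) * E +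
            (2 * (1 + lam)) * ((1 - p) * ((2 * (1 + lam)) ^ #U * D)) := by
          gcongr
          · exact le_self_pow₀ (by linarith) (Nat.succ_ne_zero _)
          · linarith
      _ = (2 * (1 + lam)) ^ (#U + 1) * (E + (1 - p) * D) := by ring
      _ ≤ (2 * (1 + lam)) ^ (#U + 1) * dirichletOn G lam (insert v U) f := by
          rw [hsplit]
          gcongr
          exact le_add_of_nonneg_left (mul_nonneg hp hA)

end CrudePoincare

section LocalToGlobal

variable {V : Type*} [Fintype V] [DecidableEq V] {G : SimpleGraph V} {lam η C : ℝ}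
  {U : Finset V}

lemma card_sub_mul_covForm_le (hlam : 0 < lam) (hη : 0 < η)
    (hinfluence : ∀ v ∈ U, totalInfluence G lam U v ≤ η)
    (ih : ∀ W : Finset V, #W < #U →
      ∀ f, covForm (expOn G lam W) f f ≤ C * dirichletOn G lam W f) (f : Finset V → ℝ) :
    (#U - η) * covForm (expOn G lam U) f f ≤ C * (#U - 1) * dirichletOn G lam U f := by
  set D := dirichletOn G lam U f with hD
  have hvertex : ∀ v ∈ U, covForm (expOn G lam U) f f ≤
      C * (D - expOn G lam U (localForm lam v f)) +
        occProb G lam U v * (1 - occProb G lam U v) * pinEffect G lam U v f ^ 2 := by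
    intro v hv
    have hcard : #(U.erase v) < #U := card_erase_lt_of_mem hv
    have haway := mul_le_mul_of_nonneg_left
      (ih (awayFrom G U v) ((card_le_card awayFrom_subset_erase).trans_lt hcard) (f ∘ insert v))
      (occProb_pos (G := G) hlam hv).le
    have herase := mul_le_mul_of_nonneg_left (ih (U.erase v) hcard f)
      (one_sub_occProb_pos (G := G) hlam hv).le
    rw [covForm_expOn_self hlam hv, hD, dirichletOn_eq_add hlam hv]
    linarith
  have hsum := sum_le_sum hvertex
  rw [sum_const, nsmul_eq_mul, sum_add_distrib, ← mul_sum, sum_sub_distrib, sum_const,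
    nsmul_eq_mul, ← dirichletOn, ← hD] at hsum
  linarith [sum_pinEffect_sq_le hlam hη hinfluence f]

/-- The binomial coefficients solve the recursion `(k + 1 - m) * C (k + 1) = (k + 1) * C k` for the
Poincaré constants exactly. -/
theorem covForm_expOn_le_choose (hlam : 0 < lam) {m k : ℕ}
    (hinfluence : ∀ (U : Finset V) v, totalInfluence G lam U v ≤ m + 1) (hmk : m ≤ k)
    (hU : #U ≤ k + 1) (f : Finset V → ℝ) :
    covForm (expOn G lam U) f f ≤
      (2 * (1 + lam)) ^ (m + 1) * k.choose m * dirichletOn G lam U f := by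
  induction k, hmk using Nat.le_induction generalizing U f with
  | base =>
    have hD := dirichletOn_nonneg (G := G) hlam U f
    refine (covForm_expOn_le_pow_card hlam U f).trans ?_
    rw [Nat.choose_self, Nat.cast_one, mul_one]
    gcongr
    linarith
  | succ k hmk ih =>
    have hD := dirichletOn_nonneg (G := G) hlam U f
    rcases Nat.le_succ_iff.1 hU with hU | hU
    · refine (ih hU f).trans ?_
      gcongr
      exact k.le_succ
    · have hpos : (0 : ℝ) < k + 1 - m := by
        have : (m : ℝ) ≤ k := by exact_mod_cast hmk
        linarith
      have hchoose : (k.choose m : ℝ) * (k + 1) = (k + 1).choose m * (k + 1 - m) := by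
        have := Nat.choose_mul_succ_eq k m
        rw [← Nat.cast_inj (R := ℝ)] at this
        push_cast [Nat.cast_sub (hmk.trans k.le_succ)] at this
        exact this
      have hstep := card_sub_mul_covForm_le hlam (η := m + 1) (by positivity)
        (C := (2 * (1 + lam)) ^ (m + 1) * k.choose m)
        (fun v _ => hinfluence U v) (fun W hW => ih (by omega)) f
      rw [hU] at hstep
      push_cast at hstep
      refine le_of_mul_le_mul_left ?_ hpos
      calc (k + 1 - m) * covForm (expOn G lam U) f f
          = (k + 1 + 1 - (m + 1)) * covForm (expOn G lam U) f f := by ring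
        _ ≤ (2 * (1 + lam)) ^ (m + 1) * k.choose m * (k + 1 + 1 - 1) * dirichletOn G lam U f :=
          hstep
        _ = (2 * (1 + lam)) ^ (m + 1) * (k.choose m * (k + 1)) * dirichletOn G lam U f := by ring
        _ = (k + 1 - m) *
              ((2 * (1 + lam)) ^ (m + 1) * (k + 1).choose m * dirichletOn G lam U f) := by
          rw [hchoose]; ring

lemma covForm_expOn_le_mul_pow (hlam : 0 < lam) {m N : ℕ}
    (hinfluence : ∀ (U : Finset V) v, totalInfluence G lam U v ≤ m + 1) (hN : 1 ≤ N)
    (hU : #U ≤ N) (f : Finset V → ℝ) :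
    covForm (expOn G lam U) f f ≤
      (2 * (1 + lam)) ^ (m + 1) * N ^ m * dirichletOn G lam U f := by
  have hD := dirichletOn_nonneg (G := G) hlam U f
  rcases le_total N (m + 1) with hNm | hmN
  · refine (covForm_expOn_le_pow_card hlam U f).trans ?_
    gcongr
    calc (2 * (1 + lam)) ^ #U ≤ (2 * (1 + lam)) ^ (m + 1) :=
          pow_le_pow_right₀ (by linarith) (hU.trans hNm)
      _ ≤ (2 * (1 + lam)) ^ (m + 1) * N ^ m :=
          le_mul_of_one_le_right (by positivity) (one_le_pow₀ (by exact_mod_cast hN))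
  · obtain ⟨k, rfl⟩ := Nat.exists_eq_add_of_le' hN
    refine (covForm_expOn_le_choose hlam hinfluence (by omega) hU f).trans ?_
    gcongr
    exact_mod_cast (Nat.choose_le_pow k m).trans (Nat.pow_le_pow_left k.le_succ m)

end LocalToGlobal

section GlauberDynamics

variable {G : SimpleGraph (Fin n)} {lam : ℝ}

lemma isIndepSet_iff (S : Finset (Fin n)) : IsIndepSet G S ↔ G.IsIndepSet (S : Set (Fin n)) :=
  ⟨fun h _ hi _ hj _ => h _ hi _ hj, fun h _ hi _ hj hij => h hi hj (G.ne_of_adj hij) hij⟩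

lemma hardcore_eq (S : Finset (Fin n)) :
    hardcore G lam S = hardcoreWeight G lam S / partitionOn G lam univ := by
  have hZ : hardcoreZ G lam = partitionOn G lam univ := by
    simp only [hardcoreZ, partitionOn, hardcoreWeight, isIndepSet_iff, powerset_univ]
  simp only [hardcore, hardcoreWeight, hZ, isIndepSet_iff, ite_div, zero_div]

lemma sum_hardcore_mul (f : Finset (Fin n) → ℝ) :
    ∑ S, hardcore G lam S * f S = expOn G lam univ f := by
  simp only [hardcore_eq, expOn_apply, powerset_univ, sum_div, div_mul_eq_mul_div]

lemma varianceE_hardcore (f : Finset (Fin n) → ℝ) :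
    varianceE (hardcore G lam) f = covForm (expOn G lam univ) f f := by
  simp only [varianceE, sum_hardcore_mul, covForm_apply, sq, Pi.mul_def]

lemma hardcore_mul_hardcore_insert_div (hlam : 0 < lam) {i : Fin n} {S : Finset (Fin n)}
    (hi : i ∉ S) :
    hardcore G lam S * hardcore G lam (insert i S) /
      (hardcore G lam S + hardcore G lam (insert i S)) =
      hardcore G lam (insert i S) / (1 + lam) := by
  have hZ := partitionOn_pos (G := G) hlam univ
  by_cases h : G.IsIndepSet (insert i S : Finset (Fin n))
  · have hS : G.IsIndepSet S := ((isIndepSet_insert hi).1 h).1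
    rw [hardcore_eq, hardcore_eq, hardcoreWeight, hardcoreWeight, if_pos h, if_pos hS,
      card_insert_of_notMem hi]
    field_simp
    ring
  · rw [hardcore_eq (insert i S), hardcoreWeight, if_neg h]
    simp only [zero_div, mul_zero]

/-- The expected squared jump of `f` when the Glauber dynamics of `μ` updates site `i` at `S`. -/
def siteEnergy (μ : Finset (Fin n) → ℝ) (f : Finset (Fin n) → ℝ) (i : Fin n)
    (S : Finset (Fin n)) : ℝ :=
  μ (S.erase i) / (μ (S.erase i) + μ (insert i S)) * (f S - f (S.erase i)) ^ 2 +
    μ (insert i S) / (μ (S.erase i) + μ (insert i S)) * (f S - f (insert i S)) ^ 2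

lemma sum_glauber_mul_sq (μ : Finset (Fin n) → ℝ) (f : Finset (Fin n) → ℝ) (S : Finset (Fin n)) :
    ∑ T, glauber μ S T * (f S - f T) ^ 2 = 1 / n * ∑ i, siteEnergy μ f i S := by
  simp only [glauber, siteEnergy, mul_assoc, ← mul_sum, sum_mul]
  rw [sum_comm]
  simp only [add_mul, sum_add_distrib, ite_mul, zero_mul, sum_ite_eq', mem_univ, if_true]

lemma dirichletForm_eq_sum_siteEnergy (μ : Finset (Fin n) → ℝ) (f : Finset (Fin n) → ℝ) :
    dirichletForm μ f = 1 / (2 * n) * ∑ i, ∑ S, μ S * siteEnergy μ f i S := by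
  simp only [dirichletForm, mul_assoc, ← mul_sum, sum_glauber_mul_sq]
  rw [sum_comm, mul_sum, mul_sum]
  refine sum_congr rfl fun S _ => ?_
  rw [← mul_sum]
  ring

lemma sum_hardcore_mul_siteEnergy (hlam : 0 < lam) (f : Finset (Fin n) → ℝ) (i : Fin n) :
    ∑ S, hardcore G lam S * siteEnergy (hardcore G lam) f i S =
      2 * expOn G lam univ (localForm lam i f) := by
  have huniv : (univ : Finset (Finset (Fin n))) = (insert i (univ.erase i)).powerset := by
    rw [insert_erase (mem_univ i), powerset_univ]
  rw [← sum_hardcore_mul, huniv, sum_powerset_insert (notMem_erase i univ),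
    sum_powerset_insert (notMem_erase i univ), ← sum_add_distrib, ← sum_add_distrib, mul_sum]
  refine sum_congr rfl fun S hS => ?_
  have hi : i ∉ S := fun h => notMem_erase i univ (mem_powerset.1 hS h)
  simp only [siteEnergy, localForm, erase_eq_of_notMem hi, erase_insert hi, insert_idem, sub_self,
    mem_insert_self, hi, if_true, if_false]
  linear_combination (2 * (f (insert i S) - f S) ^ 2) * hardcore_mul_hardcore_insert_div hlam hi

lemma dirichletForm_hardcore (hlam : 0 < lam) (f : Finset (Fin n) → ℝ) :
    dirichletForm (hardcore G lam) f = 1 / n * dirichletOn G lam univ f := by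
  simp only [dirichletForm_eq_sum_siteEnergy, sum_hardcore_mul_siteEnergy hlam, ← mul_sum,
    dirichletOn]
  ring

lemma dirichletForm_hardcore_nonneg (hlam : 0 < lam) (f : Finset (Fin n) → ℝ) :
    0 ≤ dirichletForm (hardcore G lam) f := by
  rw [dirichletForm_hardcore hlam]
  exact mul_nonneg (by positivity) (dirichletOn_nonneg hlam univ f)

lemma two_mul_one_add_pow_mul_pow_le_rpow (hlam : 0 < lam) (hlam9 : lam ≤ 9) (hn : 2 ≤ n) {δ : ℝ}
    (hδ : 0 < δ) (hδ1 : δ ≤ 1) {m : ℕ} (hm : m ≤ 541 / δ) :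
    (2 * (1 + lam)) ^ (m + 1) * (n : ℝ) ^ m * n ≤ (n : ℝ) ^ (3252 / δ) := by
  have hn' : (2 : ℝ) ≤ n := by exact_mod_cast hn
  have hbase : 2 * (1 + lam) ≤ (n : ℝ) ^ 5 := calc
    2 * (1 + lam) ≤ 2 ^ 5 := by linarith
    _ ≤ (n : ℝ) ^ 5 := by gcongr
  calc (2 * (1 + lam)) ^ (m + 1) * (n : ℝ) ^ m * n
      ≤ ((n : ℝ) ^ 5) ^ (m + 1) * (n : ℝ) ^ m * n := by gcongr
    _ = (n : ℝ) ^ ((6 * (m + 1) : ℕ) : ℝ) := by rw [Real.rpow_natCast]; ring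
    _ ≤ (n : ℝ) ^ (3252 / δ) := by
        refine Real.rpow_le_rpow_of_exponent_le (by linarith) ?_
        have hone : 1 ≤ 1 / δ := one_le_one_div hδ hδ1
        have hsplit : 3252 / δ = 6 * (541 / δ + 1 / δ) := by ring
        push_cast
        linarith

end GlauberDynamics

theorem statement3_general {δ lam : ℝ} {Δ : ℕ} {G : SimpleGraph (Fin n)} (hδ : 0 < δ) (hΔ : 3 ≤ Δ)
    (hlam : 0 < lam) (hcrit : lam ≤ (1 - δ) * lamC Δ) (hn : 2 ≤ n)
    (hdeg : ∀ v, (G.neighborSet v).ncard ≤ Δ) (f : Finset (Fin n) → ℝ) :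
    varianceE (hardcore G lam) f ≤ (n : ℝ) ^ (3252 / δ) * dirichletForm (hardcore G lam) f := by
  obtain ⟨d, rfl⟩ := Nat.exists_eq_add_of_le' (one_le_two.trans (Nat.le_of_succ_le hΔ))
  have hd : 2 ≤ d := Nat.le_of_succ_le_succ hΔ
  have hδ1 : δ ≤ 1 := (sub_pos.1 (one_sub_pos_of_le_threshold hd hlam hcrit)).le
  have hinfluence (U : Finset (Fin n)) (v : Fin n) :
      totalInfluence G lam U v ≤ ⌊541 / δ⌋₊ + 1 :=
    (totalInfluence_le_of_le_threshold hd hdeg hlam hδ hcrit U v).trans (Nat.lt_floor_add_one _).le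
  have hgap := covForm_expOn_le_mul_pow hlam hinfluence (one_le_two.trans hn)
    (card_finset_fin_le univ) f
  have hconst := two_mul_one_add_pow_mul_pow_le_rpow hlam (le_nine_of_le_threshold hd hδ hcrit)
    hn hδ hδ1 (Nat.floor_le (by positivity))
  have hgrad : dirichletOn G lam univ f = n * dirichletForm (hardcore G lam) f := by
    rw [dirichletForm_hardcore hlam, one_div, mul_inv_cancel_left₀]
    positivity
  rw [varianceE_hardcore]
  rw [hgrad, ← mul_assoc] at hgap
  exact hgap.trans (mul_le_mul_of_nonneg_right hconst (dirichletForm_hardcore_nonneg hlam f))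

/-- There is a universal constant `c ≥ 1` such that the Glauber
dynamics of the hardcore distribution at `λ = (1-δ)·λ_c(Δ)` on any graph of max
degree at most `Δ` has spectral gap at least `n^(-exp(c/δ))`. -/
theorem statement3 :
    ∃ c : ℝ, 1 ≤ c ∧
      ∀ δ : ℝ, 0 < δ → δ < 1 → ∀ (Δ : ℕ), 3 ≤ Δ →
      ∀ (n : ℕ), 2 ≤ n → ∀ G : SimpleGraph (Fin n),
      (∀ v : Fin n, (G.neighborSet v).ncard ≤ Δ) →
      ∀ f : Finset (Fin n) → ℝ,
        varianceE (hardcore G ((1 - δ) * lamC Δ)) f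
          ≤ (n : ℝ) ^ (Real.exp (c / δ))
            * dirichletForm (hardcore G ((1 - δ) * lamC Δ)) f := by
  refine ⟨3252, by norm_num, fun δ hδ hδ1 Δ hΔ n hn G hdeg f => ?_⟩
  have hlam : 0 < (1 - δ) * lamC Δ := mul_pos (sub_pos.2 hδ1) (lamC_pos hΔ)
  refine (statement3_general hδ hΔ hlam le_rfl hn hdeg f).trans ?_
  gcongr
  · exact dirichletForm_hardcore_nonneg hlam f
  · exact_mod_cast one_le_two.trans hn
  · linarith [Real.add_one_le_exp (3252 / δ)]

end PaperStmt
end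
end

section
/- Let λ_max(Ψ_μ) denote the supremum of the set of real eigenvalues of Ψ_μ (this set is nonempty). Then λ_max(Ψ_μ)/(n−1) is a real eigenvalue of P_∅, and every real eigenvalue t of P_∅ with t ≠ 1 satisfies t ≤ λ_max(Ψ_μ)/(n−1). (That is, the second largest eigenvalue of P_∅ equals λ_max(Ψ_μ)/(n−1).) -/
open scoped Classical
open Finset

noncomputable section

namespace PaperStmt

variable {n : ℕ}

/-- Probability of an event under `μ`. -/
def prE (μ : Finset (Fin n) → ℝ) (E : Finset (Fin n) → Prop) : ℝ :=
  ∑ S : Finset (Fin n), if E S then μ S else 0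

/-- Conditional probability `Pr[E | F]` under `μ`. -/
def condPrE (μ : Finset (Fin n) → ℝ) (E F : Finset (Fin n) → Prop) : ℝ :=
  prE μ (fun S => E S ∧ F S) / prE μ F

/-- The pairwise influence matrix `Ψ_μ`. -/
def psi (μ : Finset (Fin n) → ℝ) : Matrix (Fin n) (Fin n) ℝ :=
  fun i j => if i = j then 0 else
    condPrE μ (fun S => j ∈ S) (fun S => i ∈ S)
      - condPrE μ (fun S => j ∈ S) (fun S => i ∉ S)

/-- The event "`i` has state `s`" (`true` = in, `false` = out). -/
def stateEvent (i : Fin n) (s : Bool) : Finset (Fin n) → Prop :=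
  fun S => if s then i ∈ S else i ∉ S

/-- The skeleton walk matrix `P_∅`, indexed by pairs `(i, s) ∈ [n] × {in, out}`. -/
def skeletonWalk (μ : Finset (Fin n) → ℝ) :
    Matrix (Fin n × Bool) (Fin n × Bool) ℝ :=
  fun p q => if p.1 = q.1 then 0 else
    (1 / ((n : ℝ) - 1)) * condPrE μ (stateEvent q.1 q.2) (stateEvent p.1 p.2)

/-- `t` is a real eigenvalue of the real matrix `M`. -/
def IsRealEigenvalue {ι : Type*} [Fintype ι] (M : Matrix ι ι ℝ) (t : ℝ) : Prop :=
  ∃ v : ι → ℝ, v ≠ 0 ∧ M.mulVec v = t • v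

/-!
Split a function `v` on `[n] × {in, out}` into its mean at each site under the marginals of `μ` and
its difference `v (i, in) - v (i, out)` at each site. In these coordinates `(n - 1) P_∅` is block
diagonal: on the means it is the adjacency matrix of the complete graph, because the marginals of
`μ` are consistent, and on the differences it is `Ψ_μ`, because conditioning on a state of `i` moves
the marginal of `j` by a multiple of `Ψ_μ(i, j)`. The complete graph has the eigenvalues `n - 1` and
`-1`. The first is excluded by `t ≠ 1`. The second never exceeds `λ_max(Ψ_μ)`: detailed balance with
respect to the variances `Pr[i ∈ S] Pr[i ∉ S]` makes `Ψ_μ` similar to a symmetric matrix, and a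
symmetric matrix of trace zero has a nonnegative eigenvalue.
-/

section RealEigenvalue

open Matrix

variable {ι κ κ' : Type*} [Fintype ι] [Fintype κ] [Fintype κ']

theorem isRealEigenvalue_iff_mem_spectrum {M : Matrix ι ι ℝ} {t : ℝ} :
    IsRealEigenvalue M t ↔ t ∈ spectrum ℝ M := by
  rw [← spectrum_toLin', ← Module.End.hasEigenvalue_iff_mem_spectrum]
  constructor
  · rintro ⟨v, hv, hvt⟩
    exact Module.End.hasEigenvalue_of_hasEigenvector
      ⟨Module.End.mem_eigenspace_iff.mpr hvt, hv⟩
  · intro h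
    obtain ⟨v, hv⟩ := h.exists_hasEigenvector
    exact ⟨v, hv.2, hv.apply_eq_smul⟩

theorem finite_setOf_isRealEigenvalue (M : Matrix ι ι ℝ) :
    {t : ℝ | IsRealEigenvalue M t}.Finite :=
  M.finite_real_spectrum.subset fun _ => isRealEigenvalue_iff_mem_spectrum.mp

theorem isRealEigenvalue_inv_smul_iff {M : Matrix ι ι ℝ} {r t : ℝ} (hr : r ≠ 0) :
    IsRealEigenvalue (r⁻¹ • M) t ↔ IsRealEigenvalue M (r * t) := by
  simp only [IsRealEigenvalue, smul_mulVec, inv_smul_eq_iff₀ hr, smul_smul]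

theorem IsRealEigenvalue.of_intertwining {A : Matrix ι ι ℝ} {B : Matrix κ κ ℝ} {t : ℝ}
    (ht : IsRealEigenvalue A t) (T : (ι → ℝ) →ₗ[ℝ] (κ → ℝ)) (hT : Function.Injective T)
    (hAB : ∀ v, B *ᵥ T v = T (A *ᵥ v)) : IsRealEigenvalue B t := by
  obtain ⟨v, hv, hvt⟩ := ht
  exact ⟨T v, (map_ne_zero_iff T hT).mpr hv, by rw [hAB, hvt, map_smul]⟩

theorem IsRealEigenvalue.or_of_intertwining {A : Matrix ι ι ℝ} {B : Matrix κ κ ℝ}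
    {C : Matrix κ' κ' ℝ} {t : ℝ} (ht : IsRealEigenvalue A t)
    (T : (ι → ℝ) →ₗ[ℝ] (κ → ℝ)) (U : (ι → ℝ) →ₗ[ℝ] (κ' → ℝ))
    (hTU : ∀ v, T v = 0 → U v = 0 → v = 0) (hAB : ∀ v, T (A *ᵥ v) = B *ᵥ T v)
    (hAC : ∀ v, U (A *ᵥ v) = C *ᵥ U v) : IsRealEigenvalue B t ∨ IsRealEigenvalue C t := by
  obtain ⟨v, hv, hvt⟩ := ht
  by_cases hTv : T v = 0
  · exact .inr ⟨U v, fun hUv => hv (hTU v hTv hUv), by rw [← hAC, hvt, map_smul]⟩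
  · exact .inl ⟨T v, hTv, by rw [← hAB, hvt, map_smul]⟩

theorem exists_isRealEigenvalue_and_trace_le_of_isHermitian [Nonempty ι]
    {A : Matrix ι ι ℝ} (hA : A.IsHermitian) :
    ∃ t, IsRealEigenvalue A t ∧ A.trace ≤ Fintype.card ι * t := by
  have htrace : A.trace = ∑ i, hA.eigenvalues i := hA.trace_eq_sum_eigenvalues
  obtain ⟨k, -, hk⟩ := exists_max_image univ hA.eigenvalues univ_nonempty
  refine ⟨hA.eigenvalues k,
    isRealEigenvalue_iff_mem_spectrum.mpr (hA.eigenvalues_mem_spectrum_real k), ?_⟩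
  rw [htrace]
  simpa using sum_le_card_nsmul univ _ _ hk

/-- Conjugating by `diagonal √d` turns detailed balance into symmetry. -/
theorem exists_isRealEigenvalue_and_trace_le_of_detailedBalance [Nonempty ι]
    {M : Matrix ι ι ℝ} {d : ι → ℝ} (hd : ∀ i, 0 < d i)
    (hM : ∀ i j, d i * M i j = d j * M j i) :
    ∃ t, IsRealEigenvalue M t ∧ M.trace ≤ Fintype.card ι * t := by
  have hs (i : ι) : √(d i) ≠ 0 := (Real.sqrt_pos.mpr (hd i)).ne'
  let A : Matrix ι ι ℝ := of fun i j => √(d i) * M i j * (√(d j))⁻¹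
  have hA : A.IsHermitian := by
    refine IsHermitian.ext fun i j => ?_
    have hsi := Real.mul_self_sqrt (hd i).le
    have hsj := Real.mul_self_sqrt (hd j).le
    simp only [A, of_apply, star_trivial, ← div_eq_mul_inv]
    rw [div_eq_div_iff (hs i) (hs j)]
    linear_combination M j i * hsj - M i j * hsi - hM i j
  have htrace : A.trace = M.trace :=
    sum_congr rfl fun i _ => by
      change √(d i) * M i i * (√(d i))⁻¹ = M i i
      rw [mul_right_comm, mul_inv_cancel₀ (hs i), one_mul]
  obtain ⟨t, ht, htr⟩ := exists_isRealEigenvalue_and_trace_le_of_isHermitian hA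
  refine ⟨t, ht.of_intertwining (toLin' (diagonal fun i => (√(d i))⁻¹)) ?_ ?_, htrace ▸ htr⟩
  · intro v w hvw
    ext i
    simpa [mulVec_diagonal, hs i] using congrFun hvw i
  · intro v
    ext i
    simp [mulVec, dotProduct, A, diagonal_apply, mul_sum, mul_assoc, hs i]

theorem adjMatrix_top_mulVec_apply [DecidableEq ι] (v : ι → ℝ) (i : ι) :
    ((⊤ : SimpleGraph ι).adjMatrix ℝ *ᵥ v) i = ∑ j, v j - v i := by
  rw [SimpleGraph.adjMatrix_completeGraph_eq_of_one_sub_one, sub_mulVec, one_mulVec]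
  simp [mulVec, dotProduct]

theorem IsRealEigenvalue.eq_of_adjMatrix_top [DecidableEq ι] {t : ℝ}
    (ht : IsRealEigenvalue ((⊤ : SimpleGraph ι).adjMatrix ℝ) t) :
    t = Fintype.card ι - 1 ∨ t = -1 := by
  obtain ⟨v, hv, hvt⟩ := ht
  have hsum (i : ι) : ∑ j, v j = (t + 1) * v i := by
    have := congrFun hvt i
    rw [adjMatrix_top_mulVec_apply, Pi.smul_apply, smul_eq_mul] at this
    linear_combination this
  rcases eq_or_ne (∑ j, v j) 0 with h0 | h0
  · obtain ⟨i, hi⟩ := Function.ne_iff.mp hv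
    have := (mul_eq_zero.mp ((hsum i).symm.trans h0)).resolve_right hi
    exact .inr (eq_neg_of_add_eq_zero_left this)
  · have htotal : Fintype.card ι * ∑ j, v j = (t + 1) * ∑ j, v j := by
      rw [mul_sum univ v (t + 1), ← sum_congr rfl fun i _ => hsum i]
      simp
    exact .inl (eq_sub_of_add_eq (mul_right_cancel₀ h0 htotal).symm)

end RealEigenvalue

section SiteCoordinates

variable {ι : Type*}

/-- The differences `v (i, in) - v (i, out)` of a function on site-state pairs. -/
def stateDiff : (ι × Bool → ℝ) →ₗ[ℝ] (ι → ℝ) :=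
  LinearMap.funLeft ℝ ℝ (·, true) - LinearMap.funLeft ℝ ℝ (·, false)

@[simp]
theorem stateDiff_apply (v : ι × Bool → ℝ) (i : ι) :
    stateDiff v i = v (i, true) - v (i, false) :=
  rfl

/-- The mean at each site of a function on site-state pairs, where site `i` is in with probability
`p i`. -/
def siteMean (p : ι → ℝ) : (ι × Bool → ℝ) →ₗ[ℝ] (ι → ℝ) where
  toFun v i := p i * v (i, true) + (1 - p i) * v (i, false)
  map_add' v w := by ext i; simp only [Pi.add_apply]; ring
  map_smul' c v := by ext i; simp only [Pi.smul_apply, smul_eq_mul, RingHom.id_apply]; ring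

@[simp]
theorem siteMean_apply (p : ι → ℝ) (v : ι × Bool → ℝ) (i : ι) :
    siteMean p v i = p i * v (i, true) + (1 - p i) * v (i, false) :=
  rfl

/-- The indicator of the state in, centred to have mean zero at each site, where site `i` is in with
probability `p i`. -/
def centeredIndicator (p : ι → ℝ) (x : ι × Bool) : ℝ :=
  (if x.2 then 1 else 0) - p x.1

@[simp]
theorem centeredIndicator_true (p : ι → ℝ) (i : ι) : centeredIndicator p (i, true) = 1 - p i := by
  simp [centeredIndicator]

@[simp]
theorem centeredIndicator_false (p : ι → ℝ) (i : ι) : centeredIndicator p (i, false) = -p i := by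
  simp [centeredIndicator]

/-- The function on site-state pairs with mean zero at each site and prescribed differences. -/
def centeredLift (p : ι → ℝ) : (ι → ℝ) →ₗ[ℝ] (ι × Bool → ℝ) :=
  LinearMap.mulLeft ℝ (centeredIndicator p) ∘ₗ LinearMap.funLeft ℝ ℝ Prod.fst

@[simp]
theorem centeredLift_apply (p w : ι → ℝ) (x : ι × Bool) :
    centeredLift p w x = centeredIndicator p x * w x.1 :=
  rfl

theorem stateDiff_centeredLift (p w : ι → ℝ) : stateDiff (centeredLift p w) = w := by
  ext i
  simp only [stateDiff_apply, centeredLift_apply, centeredIndicator_true, centeredIndicator_false]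
  ring

theorem siteMean_centeredLift (p w : ι → ℝ) : siteMean p (centeredLift p w) = 0 := by
  ext i
  simp only [siteMean_apply, centeredLift_apply, centeredIndicator_true, centeredIndicator_false,
    Pi.zero_apply]
  ring

theorem centeredLift_injective (p : ι → ℝ) : Function.Injective (centeredLift p) :=
  Function.LeftInverse.injective (stateDiff_centeredLift p)

theorem eq_zero_of_stateDiff_eq_zero_of_siteMean_eq_zero {p : ι → ℝ} {v : ι × Bool → ℝ}
    (hdiff : stateDiff v = 0) (hmean : siteMean p v = 0) : v = 0 := by
  ext ⟨i, s⟩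
  have hd : v (i, true) - v (i, false) = 0 := congrFun hdiff i
  have hm : p i * v (i, true) + (1 - p i) * v (i, false) = 0 := congrFun hmean i
  cases s
  · exact (by linear_combination hm - p i * hd : v (i, false) = 0)
  · exact (by linear_combination hm + (1 - p i) * hd : v (i, true) = 0)

end SiteCoordinates

section Probability

variable {μ : Finset (Fin n) → ℝ} {E F : Finset (Fin n) → Prop} {i j : Fin n}

theorem prE_and_add_prE_and_not (μ : Finset (Fin n) → ℝ) (E F : Finset (Fin n) → Prop) :
    prE μ (fun S => E S ∧ F S) + prE μ (fun S => E S ∧ ¬F S) = prE μ E := by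
  simp only [prE, ← sum_add_distrib]
  refine sum_congr rfl fun S _ => ?_
  by_cases hE : E S <;> by_cases hF : F S <;> simp [hE, hF]

theorem prE_not (hsum : ∑ S, μ S = 1) : prE μ (fun S => ¬F S) = 1 - prE μ F := by
  have htrue : prE μ (fun _ => True) = 1 := by simpa [prE] using hsum
  have hsplit := prE_and_add_prE_and_not μ (fun _ => True) F
  simp only [true_and, htrue] at hsplit
  exact eq_sub_of_add_eq' hsplit

theorem prE_mul_condPrE (hF : prE μ F ≠ 0) :
    prE μ F * condPrE μ E F = prE μ (fun S => E S ∧ F S) :=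
  mul_div_cancel₀ _ hF

theorem condPrE_not (hF : prE μ F ≠ 0) :
    condPrE μ (fun S => ¬E S) F = 1 - condPrE μ E F := by
  have hsplit := prE_and_add_prE_and_not μ F E
  simp only [and_comm (a := F _)] at hsplit
  simp only [condPrE]
  rw [eq_sub_iff_add_eq', ← add_div, hsplit, div_self hF]

/-- The marginal `Pr[i ∈ S]`. -/
def marginal (μ : Finset (Fin n) → ℝ) (i : Fin n) : ℝ :=
  prE μ (fun S => i ∈ S)

theorem stateEvent_true : stateEvent i true = fun S => i ∈ S := by
  ext S
  simp [stateEvent]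

theorem stateEvent_false : stateEvent i false = fun S => i ∉ S := by
  ext S
  simp [stateEvent]

theorem prE_stateEvent_true : prE μ (stateEvent i true) = marginal μ i := by
  rw [stateEvent_true, marginal]

theorem prE_stateEvent_false (hsum : ∑ S, μ S = 1) :
    prE μ (stateEvent i false) = 1 - marginal μ i := by
  rw [stateEvent_false, prE_not hsum, marginal]

theorem prE_eq_total_probability (hsum : ∑ S, μ S = 1) (hi : ∀ s, prE μ (stateEvent i s) ≠ 0) :
    prE μ E = marginal μ i * condPrE μ E (stateEvent i true)
      + (1 - marginal μ i) * condPrE μ E (stateEvent i false) := by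
  rw [← prE_stateEvent_false hsum, ← prE_stateEvent_true, prE_mul_condPrE (hi true),
    prE_mul_condPrE (hi false), stateEvent_true, stateEvent_false, prE_and_add_prE_and_not]

theorem psi_apply_self : psi μ i i = 0 :=
  if_pos rfl

theorem psi_apply_of_ne (hij : i ≠ j) :
    psi μ i j = condPrE μ (stateEvent j true) (stateEvent i true)
      - condPrE μ (stateEvent j true) (stateEvent i false) := by
  simp only [psi, if_neg hij, stateEvent_true, stateEvent_false]

theorem condPrE_stateEvent_true_eq (hsum : ∑ S, μ S = 1)
    (hi : ∀ s, prE μ (stateEvent i s) ≠ 0) (hij : i ≠ j) (s : Bool) :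
    condPrE μ (stateEvent j true) (stateEvent i s)
      = marginal μ j + centeredIndicator (marginal μ) (i, s) * psi μ i j := by
  rw [← prE_stateEvent_true (i := j), prE_eq_total_probability hsum hi, psi_apply_of_ne hij]
  cases s
  · rw [centeredIndicator_false]
    ring
  · rw [centeredIndicator_true]
    ring

theorem condPrE_stateEvent_false_eq (hi : ∀ s, prE μ (stateEvent i s) ≠ 0) (s : Bool) :
    condPrE μ (stateEvent j false) (stateEvent i s)
      = 1 - condPrE μ (stateEvent j true) (stateEvent i s) := by
  rw [stateEvent_false, condPrE_not (hi s), stateEvent_true]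

theorem variance_mul_psi_eq_covariance (hsum : ∑ S, μ S = 1)
    (hi : ∀ s, prE μ (stateEvent i s) ≠ 0) (hij : i ≠ j) :
    marginal μ i * (1 - marginal μ i) * psi μ i j
      = prE μ (fun S => j ∈ S ∧ i ∈ S) - marginal μ i * marginal μ j := by
  have hjoint := prE_mul_condPrE (E := stateEvent j true) (hi true)
  rw [condPrE_stateEvent_true_eq hsum hi hij, centeredIndicator_true, prE_stateEvent_true,
    stateEvent_true, stateEvent_true] at hjoint
  linear_combination hjoint

theorem psi_detailedBalance (hsum : ∑ S, μ S = 1)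
    (hstate : ∀ i s, prE μ (stateEvent i s) ≠ 0) (i j : Fin n) :
    marginal μ i * (1 - marginal μ i) * psi μ i j
      = marginal μ j * (1 - marginal μ j) * psi μ j i := by
  rcases eq_or_ne i j with rfl | hij
  · rfl
  · rw [variance_mul_psi_eq_covariance hsum (hstate i) hij,
      variance_mul_psi_eq_covariance hsum (hstate j) hij.symm, mul_comm (marginal μ i)]
    simp only [and_comm]

theorem trace_psi : (psi μ).trace = 0 :=
  sum_eq_zero fun _ _ => psi_apply_self

end Probability

section SkeletonWalk

open Matrix

variable {μ : Finset (Fin n) → ℝ}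

theorem skeletonWalk_mulVec_apply (hsum : ∑ S, μ S = 1)
    (hstate : ∀ i s, prE μ (stateEvent i s) ≠ 0) (v : Fin n × Bool → ℝ) (x : Fin n × Bool) :
    (skeletonWalk μ *ᵥ v) x = ((n : ℝ) - 1)⁻¹ *
      (((⊤ : SimpleGraph (Fin n)).adjMatrix ℝ *ᵥ siteMean (marginal μ) v) x.1
        + centeredIndicator (marginal μ) x * (psi μ *ᵥ stateDiff v) x.1) := by
  obtain ⟨i, s⟩ := x
  simp only [mulVec, dotProduct, Fintype.sum_prod_type, Fintype.sum_bool, mul_sum,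
    ← sum_add_distrib]
  refine sum_congr rfl fun j _ => ?_
  rcases eq_or_ne i j with rfl | hij
  · simp [skeletonWalk, psi_apply_self]
  · simp only [skeletonWalk, if_neg hij, one_div, condPrE_stateEvent_false_eq (hstate i),
      condPrE_stateEvent_true_eq hsum (hstate i) hij, SimpleGraph.adjMatrix_apply,
      SimpleGraph.top_adj, if_pos hij, siteMean_apply, stateDiff_apply]
    ring

theorem stateDiff_skeletonWalk_mulVec (hsum : ∑ S, μ S = 1)
    (hstate : ∀ i s, prE μ (stateEvent i s) ≠ 0) (v : Fin n × Bool → ℝ) :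
    stateDiff (skeletonWalk μ *ᵥ v) = (((n : ℝ) - 1)⁻¹ • psi μ) *ᵥ stateDiff v := by
  ext i
  rw [stateDiff_apply, skeletonWalk_mulVec_apply hsum hstate, skeletonWalk_mulVec_apply hsum hstate,
    centeredIndicator_true, centeredIndicator_false, smul_mulVec, Pi.smul_apply, smul_eq_mul]
  ring

theorem siteMean_skeletonWalk_mulVec (hsum : ∑ S, μ S = 1)
    (hstate : ∀ i s, prE μ (stateEvent i s) ≠ 0) (v : Fin n × Bool → ℝ) :
    siteMean (marginal μ) (skeletonWalk μ *ᵥ v)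
      = (((n : ℝ) - 1)⁻¹ • (⊤ : SimpleGraph (Fin n)).adjMatrix ℝ) *ᵥ siteMean (marginal μ) v := by
  ext i
  rw [siteMean_apply, skeletonWalk_mulVec_apply hsum hstate, skeletonWalk_mulVec_apply hsum hstate,
    centeredIndicator_true, centeredIndicator_false, smul_mulVec, Pi.smul_apply, smul_eq_mul]
  ring

theorem skeletonWalk_mulVec_centeredLift (hsum : ∑ S, μ S = 1)
    (hstate : ∀ i s, prE μ (stateEvent i s) ≠ 0) (w : Fin n → ℝ) :
    skeletonWalk μ *ᵥ centeredLift (marginal μ) w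
      = centeredLift (marginal μ) ((((n : ℝ) - 1)⁻¹ • psi μ) *ᵥ w) := by
  ext x
  rw [skeletonWalk_mulVec_apply hsum hstate, siteMean_centeredLift, stateDiff_centeredLift,
    mulVec_zero, Pi.zero_apply, zero_add, centeredLift_apply, smul_mulVec, Pi.smul_apply,
    smul_eq_mul, mul_left_comm]

theorem IsRealEigenvalue.skeletonWalk_of_psi (hn1 : (n : ℝ) - 1 ≠ 0) (hsum : ∑ S, μ S = 1)
    (hstate : ∀ i s, prE μ (stateEvent i s) ≠ 0) {t : ℝ} (ht : IsRealEigenvalue (psi μ) t) :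
    IsRealEigenvalue (skeletonWalk μ) (t / ((n : ℝ) - 1)) := by
  rw [← mul_div_cancel₀ t hn1, ← isRealEigenvalue_inv_smul_iff hn1] at ht
  exact ht.of_intertwining _ (centeredLift_injective _)
    (skeletonWalk_mulVec_centeredLift hsum hstate)

theorem IsRealEigenvalue.psi_or_eq_of_skeletonWalk (hn1 : (n : ℝ) - 1 ≠ 0)
    (hsum : ∑ S, μ S = 1) (hstate : ∀ i s, prE μ (stateEvent i s) ≠ 0) {t : ℝ}
    (ht : IsRealEigenvalue (skeletonWalk μ) t) :
    IsRealEigenvalue (psi μ) (((n : ℝ) - 1) * t) ∨ t = 1 ∨ ((n : ℝ) - 1) * t = -1 := by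
  have hsplit := ht.or_of_intertwining stateDiff (siteMean (marginal μ))
    (fun _ => eq_zero_of_stateDiff_eq_zero_of_siteMean_eq_zero)
    (stateDiff_skeletonWalk_mulVec hsum hstate) (siteMean_skeletonWalk_mulVec hsum hstate)
  simp only [isRealEigenvalue_inv_smul_iff hn1] at hsplit
  refine hsplit.imp_right fun htop => htop.eq_of_adjMatrix_top.imp_left fun h => ?_
  rwa [Fintype.card_fin, mul_eq_left₀ hn1] at h

theorem exists_nonneg_isRealEigenvalue_psi [NeZero n] (hsum : ∑ S, μ S = 1)
    (hstate : ∀ i s, 0 < prE μ (stateEvent i s)) : ∃ t, 0 ≤ t ∧ IsRealEigenvalue (psi μ) t := by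
  have hvar (i : Fin n) : 0 < marginal μ i * (1 - marginal μ i) := by
    rw [← prE_stateEvent_false hsum, ← prE_stateEvent_true]
    exact mul_pos (hstate i true) (hstate i false)
  obtain ⟨t, ht, htr⟩ := exists_isRealEigenvalue_and_trace_le_of_detailedBalance hvar
    (psi_detailedBalance hsum fun i s => (hstate i s).ne')
  rw [trace_psi] at htr
  exact ⟨t, nonneg_of_mul_nonneg_right htr (Nat.cast_pos.mpr Fintype.card_pos), ht⟩

end SkeletonWalk

theorem statement5_general (n : ℕ) (hn : 2 ≤ n) (μ : Finset (Fin n) → ℝ)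
    (hsum : ∑ S : Finset (Fin n), μ S = 1)
    (hmarg : ∀ i : Fin n, 0 < prE μ (fun S => i ∈ S)
      ∧ prE μ (fun S => i ∈ S) < 1) :
    ({t : ℝ | IsRealEigenvalue (psi μ) t}).Nonempty
    ∧ IsRealEigenvalue (skeletonWalk μ)
        (sSup {t : ℝ | IsRealEigenvalue (psi μ) t} / ((n : ℝ) - 1))
    ∧ ∀ t : ℝ, IsRealEigenvalue (skeletonWalk μ) t → t ≠ 1 →
        t ≤ sSup {t : ℝ | IsRealEigenvalue (psi μ) t} / ((n : ℝ) - 1) := by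
  have : NeZero n := ⟨by omega⟩
  have hn1 : 0 < (n : ℝ) - 1 := sub_pos.mpr (Nat.one_lt_cast.mpr hn)
  have hstate (i : Fin n) (s : Bool) : 0 < prE μ (stateEvent i s) := by
    cases s
    · exact prE_stateEvent_false hsum ▸ sub_pos.mpr (hmarg i).2
    · exact prE_stateEvent_true ▸ (hmarg i).1
  have hstate₀ (i : Fin n) (s : Bool) : prE μ (stateEvent i s) ≠ 0 := (hstate i s).ne'
  obtain ⟨t₀, ht₀, hev₀⟩ := exists_nonneg_isRealEigenvalue_psi hsum hstate
  have hfin := finite_setOf_isRealEigenvalue (psi μ)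
  have hmax := Set.Nonempty.csSup_mem ⟨t₀, hev₀⟩ hfin
  refine ⟨⟨t₀, hev₀⟩, hmax.skeletonWalk_of_psi hn1.ne' hsum hstate₀, fun t ht ht1 => ?_⟩
  rw [le_div_iff₀' hn1]
  rcases ht.psi_or_eq_of_skeletonWalk hn1.ne' hsum hstate₀ with hpsi | h | h
  · exact le_csSup hfin.bddAbove hpsi
  · exact absurd h ht1
  · linarith [le_csSup hfin.bddAbove hev₀]

/-- The set of real eigenvalues of `Ψ_μ` is nonempty,
`λ_max(Ψ_μ)/(n-1)` is a real eigenvalue of `P_∅`, and every real eigenvalue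
`t ≠ 1` of `P_∅` satisfies `t ≤ λ_max(Ψ_μ)/(n-1)`. -/
theorem statement5 (n : ℕ) (hn : 2 ≤ n) (μ : Finset (Fin n) → ℝ)
    (hpos : ∀ S, 0 ≤ μ S) (hsum : ∑ S : Finset (Fin n), μ S = 1)
    (hmarg : ∀ i : Fin n, 0 < prE μ (fun S => i ∈ S)
      ∧ prE μ (fun S => i ∈ S) < 1) :
    ({t : ℝ | IsRealEigenvalue (psi μ) t}).Nonempty
    ∧ IsRealEigenvalue (skeletonWalk μ)
        (sSup {t : ℝ | IsRealEigenvalue (psi μ) t} / ((n : ℝ) - 1))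
    ∧ ∀ t : ℝ, IsRealEigenvalue (skeletonWalk μ) t → t ≠ 1 →
        t ≤ sSup {t : ℝ | IsRealEigenvalue (psi μ) t} / ((n : ℝ) - 1) :=
  statement5_general n hn μ hsum hmarg

end PaperStmt
end
end
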